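/- Let A be an infinite-dimensional simple AF C*-algebra, and let F be a unital C*-algebra admitting an increasing sequence (S_k) of unital *-subalgebras with each S_k *-isomorphic to M_{2^k}(ℂ) and with union dense in F. Then A is isomorphic as a Banach space either to K, the C*-algebra of compact operators on ℓ²(ℕ, ℂ), or to F. -/

import Mathlib

/-!
Statement 5 (Corollary 1.4 of the paper).

An infinite-dimensional simple AF C*-algebra is isomorphic as a Banach space
either to the compact operators `K` on `ℓ²(ℕ, ℂ)` or to the Fermion algebra.
-/

noncomputable section

local notation "H" => lp (fun _ : ℕ => ℂ) 2

/-- The compact operators on `ℓ²(ℕ, ℂ)`, as a subspace of the bounded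
operators with the operator norm. -/
def CompactOperators : Submodule ℂ (H →L[ℂ] H) where
  carrier := {T | IsCompactOperator T}
  add_mem' := fun hS hT => hS.add hT
  zero_mem' := isCompactOperator_zero
  smul_mem' := fun c _T hT => hT.smul c

/-- `S` is an AF presentation of the C*-algebra `A`: an increasing sequence of
finite-dimensional *-subalgebras whose union is dense. -/
def IsAFPresentation (A : Type*) [NonUnitalCStarAlgebra A]
    (S : ℕ → NonUnitalStarSubalgebra ℂ A) : Prop :=
  Monotone S ∧ (∀ k, FiniteDimensional ℂ (S k)) ∧ Dense (⋃ k, (S k : Set A))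

/-- A C*-algebra is simple if its only closed two-sided ideals are `{0}` and
the whole algebra. -/
def IsSimpleCStarAlgebra (A : Type*) [NonUnitalCStarAlgebra A] : Prop :=
  ∀ I : TwoSidedIdeal A, IsClosed (I : Set A) → I = ⊥ ∨ I = ⊤

namespace AFB
open scoped ComplexConjugate

section MinProj
variable {X : Type*} [NonUnitalCStarAlgebra X]

/-- In a finite-dimensional star subalgebra, a nonzero self-adjoint element has a nonzero
spectral projection belonging to a nonzero eigenvalue. -/
lemma exists_spectral_proj (B : NonUnitalStarSubalgebra ℂ X) [FiniteDimensional ℂ B]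
    {h : X} (hB : h ∈ B) (hs : star h = h) (h0 : h ≠ 0) :
    ∃ p ∈ B, star p = p ∧ p * p = p ∧ p ≠ 0 ∧ ∃ t : ℂ, t ≠ 0 ∧ h * p = t • p := by
  have hcl : IsClosed (B : Set X) :=
    (Submodule.closed_of_finiteDimensional (B.toNonUnitalSubalgebra.toSubmodule))
  have : IsClosed (B : Set X) := hcl
  let _ : NonUnitalCStarAlgebra B := inferInstance
  let k : B := ⟨h, hB⟩
  have hk : IsSelfAdjoint k := Subtype.ext hs
  have hkn : IsStarNormal k := hk.isStarNormal
  have hk0 : k ≠ 0 := fun e => h0 (congrArg Subtype.val e)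
  have hfin : (quasispectrum ℂ k).Finite := by
    rw [Unitization.quasispectrum_eq_spectrum_inr ℂ k]
    have : FiniteDimensional ℂ (Unitization ℂ B) :=
      Module.Finite.equiv (Unitization.addEquiv ℂ B |>.symm.toLinearEquiv (fun c x => rfl) : (ℂ × B) ≃ₗ[ℂ] Unitization ℂ B)
    have hi : IsIntegral ℂ (k : Unitization ℂ B) := Algebra.IsIntegral.isIntegral _
    have hne := minpoly.ne_zero hi
    refine ((minpoly ℂ (k : Unitization ℂ B)).rootSet_finite ℂ).subset fun z hz => ?_
    rw [Polynomial.mem_rootSet]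
    refine ⟨hne, ?_⟩
    have := spectrum.subset_polynomial_aeval (k : Unitization ℂ B) (minpoly ℂ (k : Unitization ℂ B)) ⟨z, hz, rfl⟩
    rw [minpoly.aeval, spectrum.zero_eq] at this
    simpa [Polynomial.aeval_def] using this
  obtain ⟨t, ht, ht0⟩ : ∃ t ∈ quasispectrum ℂ k, t ≠ 0 := by
    by_contra! hcon
    apply hk0
    rw [← cfcₙ_id ℂ k, cfcₙ_congr (g := fun _ => 0) (fun x hx => by simpa using hcon x hx)]
    simp
  let f : ℂ → ℂ := fun z => if z = t then 1 else 0
  have hf0 : f 0 = 0 := by simp [f, ht0.symm]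
  have hfc : ContinuousOn f (quasispectrum ℂ k) := by
    have := hfin.to_subtype
    rw [continuousOn_iff_continuous_domRestrict]
    exact continuous_of_discreteTopology
  refine ⟨(cfcₙ f k : B), (cfcₙ f k).2, ?_, ?_, ?_, t, ht0, ?_⟩
  · have : star (cfcₙ f k) = cfcₙ f k := by
      rw [← cfcₙ_star]
      congr 1
      ext z; simp [f]
    exact congrArg Subtype.val this
  · have : (cfcₙ f k) * (cfcₙ f k) = cfcₙ f k := by
      rw [← cfcₙ_mul f f k]
      congr 1
      ext z; simp [f]
    exact congrArg Subtype.val this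
  · intro e
    have e' : cfcₙ f k = 0 := Subtype.ext e
    rw [← cfcₙ_zero ℂ k] at e'
    have := (cfcₙ_eq_cfcₙ_iff_eqOn (a := k) (f := f) (g := 0)).1 e' ht
    simp [f] at this
  · have : k * (cfcₙ f k) = t • cfcₙ f k := by
      nth_rewrite 1 [← cfcₙ_id ℂ k]
      rw [← cfcₙ_mul id f k, ← cfcₙ_smul t f k]
      congr 1
      ext z; simp only [f, id]; split_ifs with hz <;> simp [hz]
    exact congrArg Subtype.val this

/-- Minimal projections of a star subalgebra. -/
structure IsMinProj (B : NonUnitalStarSubalgebra ℂ X) (q : X) : Prop where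
  mem : q ∈ B
  sa : star q = q
  idem : q * q = q
  ne : q ≠ 0
  min : ∀ x ∈ B, ∃ c : ℂ, q * x * q = c • q

/-- The corner `q B q`. -/
def corner (B : NonUnitalStarSubalgebra ℂ X) (q : X) : Submodule ℂ X where
  carrier := {b | b ∈ B ∧ q * b = b ∧ b * q = b}
  add_mem' := by
    rintro a b ⟨ha, ha1, ha2⟩ ⟨hb, hb1, hb2⟩
    exact ⟨add_mem ha hb, by rw [mul_add, ha1, hb1], by rw [add_mul, ha2, hb2]⟩
  zero_mem' := ⟨zero_mem B, by simp, by simp⟩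
  smul_mem' := by
    rintro c b ⟨hb, hb1, hb2⟩
    exact ⟨SMulMemClass.smul_mem c hb, by rw [mul_smul_comm, hb1], by rw [smul_mul_assoc, hb2]⟩

lemma corner_fd (B : NonUnitalStarSubalgebra ℂ X) [hB : FiniteDimensional ℂ B] (q : X) :
    FiniteDimensional ℂ (corner B q) := by
  have : FiniteDimensional ℂ B.toNonUnitalSubalgebra.toSubmodule := hB
  exact Submodule.finiteDimensional_of_le
    (S₂ := B.toNonUnitalSubalgebra.toSubmodule) (fun b hb => hb.1)

lemma corner_lt (B : NonUnitalStarSubalgebra ℂ X) {p q : X}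
    (hq : q ∈ B) (hqs : q * q = q) (hpq : p * q = p) (hqp : q * p = p)
    (hne : p ≠ q) : corner B p < corner B q := by
  refine lt_of_le_of_ne ?_ ?_
  · rintro b ⟨hb, h1, h2⟩
    refine ⟨hb, ?_, ?_⟩
    · rw [← h1, ← mul_assoc, hqp]
    · rw [← h2, mul_assoc, hpq]
  · intro e
    have : q ∈ corner B p := by rw [e]; exact ⟨hq, hqs, hqs⟩
    exact hne (hpq.symm.trans this.2.1)

lemma exists_smaller_proj (B : NonUnitalStarSubalgebra ℂ X) [FiniteDimensional ℂ B] {q : X}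
    (hq : q ∈ B) (hqs : star q = q) (hqq : q * q = q) (hq0 : q ≠ 0) (hnm : ¬ IsMinProj B q) :
    ∃ p ∈ B, star p = p ∧ p * p = p ∧ p ≠ 0 ∧ p * q = p ∧ q * p = p ∧ p ≠ q := by
  have key : ∃ h ∈ B, star h = h ∧ q * h = h ∧ h * q = h ∧ ∀ c : ℂ, h ≠ c • q := by
    by_contra! hcon
    apply hnm
    refine ⟨hq, hqs, hqq, hq0, fun x hx => ?_⟩
    have hy : q * x * q ∈ B := mul_mem (mul_mem hq hx) hq
    set y := q * x * q with hyd
    have hqy : q * y = y := by rw [hyd, ← mul_assoc, ← mul_assoc, hqq]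
    have hyq : y * q = y := by rw [hyd, mul_assoc, hqq]
    have hqy' : q * star y = star y := by
      conv_rhs => rw [← hyq, star_mul, hqs]
    have hyq' : star y * q = star y := by
      conv_rhs => rw [← hqy, star_mul, hqs]
    obtain ⟨a, ha⟩ := hcon (y + star y) (add_mem hy (star_mem hy)) (by simp [add_comm])
      (by rw [mul_add, hqy, hqy']) (by rw [add_mul, hyq, hyq'])
    obtain ⟨b, hb⟩ := hcon (Complex.I • (y - star y))
      (SMulMemClass.smul_mem _ (sub_mem hy (star_mem hy)))
      (by simp [star_smul, smul_sub]; abel)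
      (by rw [mul_smul_comm, mul_sub, hqy, hqy']) (by rw [smul_mul_assoc, sub_mul, hyq, hyq'])
    refine ⟨(1/2 : ℂ) * (a - Complex.I * b), ?_⟩
    have h2 : y - star y = (- Complex.I * b) • q := by
      rw [mul_smul, ← hb, smul_smul]; simp
    have h3 : (2 : ℂ) • y = (y + star y) + (y - star y) := by rw [two_smul]; abel
    have : y = (1/2 : ℂ) • ((2 : ℂ) • y) := by rw [smul_smul]; norm_num
    rw [this, h3, ha, h2, ← add_smul, smul_smul]
    congr 1; ring
  obtain ⟨h, hB, hs, h1, h2, hc⟩ := key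
  obtain ⟨p, hpB, hps, hpp, hp0, t, ht, htp⟩ :=
    exists_spectral_proj B hB hs (by simpa using hc 0)
  have hqp : q * p = p := by
    have : p = t⁻¹ • (h * p) := by rw [htp, smul_smul, inv_mul_cancel₀ ht, one_smul]
    rw [this, mul_smul_comm, ← mul_assoc, h1]
  have hpq : p * q = p := by
    conv_rhs => rw [← hps, ← hqp, star_mul, hqs, hps]
  refine ⟨p, hpB, hps, hpp, hp0, hpq, hqp, ?_⟩
  rintro rfl
  exact hc t (h2.symm.trans htp)

lemma exists_min_decomp (B : NonUnitalStarSubalgebra ℂ X) [FiniteDimensional ℂ B] :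
    ∀ (n : ℕ) (q : X), q ∈ B → star q = q → q * q = q →
      Module.finrank ℂ (corner B q) ≤ n →
    ∃ s : Finset X, (∀ p ∈ s, IsMinProj B p) ∧ (∀ p ∈ s, ∀ p' ∈ s, p ≠ p' → p * p' = 0) ∧
      ∑ p ∈ s, p = q := by
  classical
  intro n
  induction n with
  | zero =>
    intro q hq hs hqq hd
    refine ⟨∅, by simp, by simp, ?_⟩
    have := corner_fd B q
    have h0 : corner B q = ⊥ := by
      rw [← Submodule.finrank_eq_zero (R := ℂ)]; omega
    have : q ∈ corner B q := ⟨hq, hqq, hqq⟩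
    rw [h0] at this
    simpa using this.symm
  | succ n ih =>
    intro q hq hs hqq hd
    by_cases hq0 : q = 0
    · exact ⟨∅, by simp, by simp, by simp [hq0]⟩
    by_cases hm : IsMinProj B q
    · exact ⟨{q}, by simpa using hm, by simp, by simp⟩
    obtain ⟨p, hpB, hps, hpp, hp0, hpq, hqp, hne⟩ := exists_smaller_proj B hq hs hqq hq0 hm
    have := corner_fd B q
    have l1 := Submodule.finrank_lt_finrank_of_lt (corner_lt B hq hqq hpq hqp hne)
    have hrr : (q - p) * (q - p) = q - p := by
      rw [sub_mul, mul_sub, mul_sub, hqq, hqp, hpq, hpp]; abel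
    have hrq : (q - p) * q = q - p := by rw [sub_mul, hqq, hpq]
    have hqr : q * (q - p) = q - p := by rw [mul_sub, hqq, hqp]
    have l2 := Submodule.finrank_lt_finrank_of_lt (corner_lt B hq hqq hrq hqr
      (by simpa using hp0))
    obtain ⟨s, hs1, hs2, hs3⟩ := ih p hpB hps hpp (by omega)
    obtain ⟨s', hs1', hs2', hs3'⟩ := ih (q - p) (sub_mem hq hpB) (by simp [hs, hps]) hrr (by omega)
    have habs : ∀ a ∈ s, a * p = a := by
      intro a ha
      rw [← hs3, Finset.mul_sum, Finset.sum_eq_single_of_mem a ha]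
      · exact (hs1 a ha).idem
      · intro b hb hba; exact hs2 a ha b hb hba.symm
    have habs' : ∀ a ∈ s', (q - p) * a = a := by
      intro a ha
      rw [← hs3', Finset.sum_mul, Finset.sum_eq_single_of_mem a ha]
      · exact (hs1' a ha).idem
      · intro b hb hba; exact hs2' b hb a ha hba
    have hor : ∀ a ∈ s, ∀ b ∈ s', a * b = 0 := by
      intro a ha b hb
      rw [← habs a ha, ← habs' b hb, mul_assoc, ← mul_assoc p, mul_sub, hpq, hpp]
      simp
    have hor' : ∀ a ∈ s, ∀ b ∈ s', b * a = 0 := by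
      intro a ha b hb
      have := congrArg star (hor a ha b hb)
      rwa [star_mul, (hs1 a ha).sa, (hs1' b hb).sa, star_zero] at this
    have hdis : Disjoint s s' := by
      rw [Finset.disjoint_left]
      intro a ha hb
      exact (hs1 a ha).ne (by rw [← (hs1 a ha).idem]; exact hor a ha a hb)
    refine ⟨s ∪ s', ?_, ?_, ?_⟩
    · intro a ha
      rcases Finset.mem_union.1 ha with h | h
      exacts [hs1 a h, hs1' a h]
    · intro a ha b hb hab
      rcases Finset.mem_union.1 ha with h | h <;> rcases Finset.mem_union.1 hb with h' | h'
      exacts [hs2 a h b h' hab, hor a h b h', hor' b h' a h, hs2' a h b h' hab]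
    · rw [Finset.sum_union hdis, hs3, hs3']; abel

lemma min_decomp (B : NonUnitalStarSubalgebra ℂ X) [FiniteDimensional ℂ B] {q : X}
    (hq : q ∈ B) (hs : star q = q) (hqq : q * q = q) :
    ∃ s : Finset X, (∀ p ∈ s, IsMinProj B p) ∧ (∀ p ∈ s, ∀ p' ∈ s, p ≠ p' → p * p' = 0) ∧
      ∑ p ∈ s, p = q :=
  exists_min_decomp B _ q hq hs hqq le_rfl

lemma decomp_mul {s : Finset X} {q : X} {B : NonUnitalStarSubalgebra ℂ X}
    (h1 : ∀ p ∈ s, IsMinProj B p) (h2 : ∀ p ∈ s, ∀ p' ∈ s, p ≠ p' → p * p' = 0)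
    (h3 : ∑ p ∈ s, p = q) {p : X} (hp : p ∈ s) : p * q = p ∧ q * p = p := by
  constructor
  · rw [← h3, Finset.mul_sum, Finset.sum_eq_single_of_mem p hp]
    · exact (h1 p hp).idem
    · intro b hb hba; exact h2 p hp b hb hba.symm
  · rw [← h3, Finset.sum_mul, Finset.sum_eq_single_of_mem p hp]
    · exact (h1 p hp).idem
    · intro b hb hba; exact h2 b hb p hp hba

/-- If `y* y = c q` for a projection `q ≠ 0` and `y ≠ 0`, then `c` is a positive real. -/
lemma coeff_pos {y q : X} {c : ℂ} (hqs : star q = q) (hqq : q * q = q) (hq : q ≠ 0) (hy : y ≠ 0)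
    (h : star y * y = c • q) : ∃ r : ℝ, 0 < r ∧ c = r := by
  have hc0 : c ≠ 0 := by
    rintro rfl
    rw [zero_smul, CStarRing.star_mul_self_eq_zero_iff] at h
    exact hy h
  have hreal : star c = c := by
    have := congrArg star h
    rw [star_mul, star_star, h, star_smul, hqs] at this
    have h' : (c - star c) • q = 0 := by rw [sub_smul, this, sub_self]
    rcases smul_eq_zero.1 h' with h' | h'
    · exact (sub_eq_zero.1 h').symm
    · exact absurd h' hq
  obtain ⟨r, hr⟩ := Complex.conj_eq_iff_real.1 hreal
  refine ⟨r, ?_, hr⟩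
  by_contra hcon
  have hr' : r < 0 := lt_of_le_of_ne (not_lt.1 hcon) (by rintro rfl; exact hc0 (by simpa using hr))
  let _ := CStarAlgebra.spectralOrder X
  let _ := CStarAlgebra.spectralOrderedRing X
  have e1 : 0 ≤ star y * y := star_mul_self_nonneg y
  have e2 : 0 ≤ star (((Real.sqrt (-r) : ℝ) : ℂ) • q) * (((Real.sqrt (-r) : ℝ) : ℂ) • q) :=
    star_mul_self_nonneg _
  have e3 : star (((Real.sqrt (-r) : ℝ) : ℂ) • q) * (((Real.sqrt (-r) : ℝ) : ℂ) • q)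
      = - (star y * y) := by
    rw [h, star_smul, hqs, smul_mul_smul_comm, hqq, ← neg_smul, hr]
    congr 1
    simp only [RCLike.star_def, Complex.conj_ofReal]
    rw [← Complex.ofReal_mul, Real.mul_self_sqrt (by linarith)]
    simp
  rw [e3] at e2
  have e4 : star y * y = 0 := le_antisymm (by simpa using e2) e1
  exact hy ((CStarRing.star_mul_self_eq_zero_iff y).1 e4)

lemma min_equiv {B : NonUnitalStarSubalgebra ℂ X} {p p' x : X} (hp : IsMinProj B p)
    (hp' : IsMinProj B p') (hx : x ∈ B) (h : p * x * p' ≠ 0) :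
    ∃ w ∈ B, star w * w = p' ∧ w * star w = p := by
  set y := p * x * p' with hy
  have hyB : y ∈ B := mul_mem (mul_mem hp.mem hx) hp'.mem
  have hpy : p * y = y := by rw [hy, ← mul_assoc, ← mul_assoc, hp.idem]
  have hyp : y * p' = y := by rw [hy, mul_assoc, hp'.idem]
  have hyp2 : p' * star y = star y := by conv_rhs => rw [← hyp, star_mul, hp'.sa]
  have hpy2 : star y * p = star y := by conv_rhs => rw [← hpy, star_mul, hp.sa]
  obtain ⟨c, hc⟩ := hp'.min (star y * y) (mul_mem (star_mem hyB) hyB)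
  rw [← mul_assoc, hyp2, mul_assoc, hyp] at hc
  obtain ⟨d, hd⟩ := hp.min (y * star y) (mul_mem hyB (star_mem hyB))
  rw [← mul_assoc, hpy, mul_assoc, hpy2] at hd
  have hcd : c = d := by
    have : c • y = d • y := by
      calc c • y = y * (star y * y) := by rw [hc, mul_smul_comm, hyp]
        _ = d • y := by rw [← mul_assoc, hd, smul_mul_assoc, hpy]
    have h' : (c - d) • y = 0 := by rw [sub_smul, this, sub_self]
    rcases smul_eq_zero.1 h' with h' | h'
    · exact sub_eq_zero.1 h'
    · exact absurd h' h
  obtain ⟨r, hr, hcr⟩ := coeff_pos hp'.sa hp'.idem hp'.ne h hc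
  have hs : ((Real.sqrt r : ℝ) : ℂ)⁻¹ * ((Real.sqrt r : ℝ) : ℂ)⁻¹ * (r : ℂ) = 1 := by
    rw [← mul_inv, ← Complex.ofReal_mul, Real.mul_self_sqrt hr.le, inv_mul_cancel₀]
    exact_mod_cast hr.ne'
  have hst : star (((Real.sqrt r : ℝ) : ℂ)⁻¹) = ((Real.sqrt r : ℝ) : ℂ)⁻¹ := by simp
  refine ⟨((Real.sqrt r : ℝ) : ℂ)⁻¹ • y, SMulMemClass.smul_mem _ hyB, ?_, ?_⟩
  · rw [star_smul, smul_mul_smul_comm, hc, smul_smul, hst, hcr, hs, one_smul]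
  · rw [star_smul, smul_mul_smul_comm, hd, smul_smul, hst, ← hcd, hcr, hs, one_smul]

end MinProj
end AFB

namespace AFB

section Norms
variable {X : Type*} [NonUnitalCStarAlgebra X]

lemma norm_sum_orth_aux {ι : Type*} (s : Finset ι) (n : ℕ) : ∀ (a : ι → X) (C : ℝ), 0 ≤ C →
    (∀ i ∈ s, ‖a i‖ ≤ C) →
    (∀ i ∈ s, ∀ j ∈ s, i ≠ j → star (a i) * a j = 0 ∧ a i * star (a j) = 0) →
    ‖∑ i ∈ s, a i‖ ^ (2 ^ n) ≤ s.card * C ^ (2 ^ n) := by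
  induction n with
  | zero =>
    intro a C hC h1 h2
    simp only [pow_zero, pow_one]
    calc ‖∑ i ∈ s, a i‖ ≤ ∑ i ∈ s, ‖a i‖ := norm_sum_le _ _
      _ ≤ ∑ i ∈ s, C := Finset.sum_le_sum h1
      _ = _ := by simp
  | succ n ih =>
    intro a C hC h1 h2
    have e : star (∑ i ∈ s, a i) * (∑ i ∈ s, a i) = ∑ i ∈ s, star (a i) * a i := by
      rw [star_sum, Finset.sum_mul]
      refine Finset.sum_congr rfl fun i hi => ?_
      rw [Finset.mul_sum, Finset.sum_eq_single_of_mem i hi]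
      intro j hj hij
      exact (h2 i hi j hj hij.symm).1
    have := ih (fun i => star (a i) * a i) (C ^ 2) (by positivity) ?_ ?_
    · rw [← e, CStarRing.norm_star_mul_self, ← pow_two, ← pow_mul, ← pow_mul, ← pow_succ'] at this
      exact this
    · intro i hi
      rw [CStarRing.norm_star_mul_self, ← pow_two]
      exact pow_le_pow_left₀ (norm_nonneg _) (h1 i hi) 2
    · intro i hi j hj hij
      simp only [star_mul, star_star]
      constructor <;>
      · rw [mul_assoc, ← mul_assoc (a i), (h2 i hi j hj hij).2]; simp

/-- Orthogonal sums have the maximum norm. -/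
lemma norm_sum_orth {ι : Type*} (s : Finset ι) (a : ι → X) (C : ℝ) (hC : 0 ≤ C)
    (h1 : ∀ i ∈ s, ‖a i‖ ≤ C)
    (h2 : ∀ i ∈ s, ∀ j ∈ s, i ≠ j → star (a i) * a j = 0 ∧ a i * star (a j) = 0) :
    ‖∑ i ∈ s, a i‖ ≤ C := by
  by_contra! hcon
  rcases hC.eq_or_lt with rfl | hC'
  · have : ∑ i ∈ s, a i = 0 := Finset.sum_eq_zero fun i hi =>
      norm_eq_zero.1 (le_antisymm (h1 i hi) (norm_nonneg _))
    rw [this] at hcon; simp at hcon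
  · have hr : 1 < ‖∑ i ∈ s, a i‖ / C := by rwa [one_lt_div hC']
    obtain ⟨n, hn⟩ := pow_unbounded_of_one_lt (s.card : ℝ) hr
    have h3 := norm_sum_orth_aux s n a C hC h1 h2
    have h4 : (‖∑ i ∈ s, a i‖ / C) ^ (2 ^ n) ≤ s.card := by
      rw [div_pow, div_le_iff₀ (by positivity)]; exact h3
    have h5 : (‖∑ i ∈ s, a i‖ / C) ^ n ≤ (‖∑ i ∈ s, a i‖ / C) ^ (2 ^ n) :=
      pow_le_pow_right₀ hr.le Nat.lt_two_pow_self.le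
    linarith

lemma norm_add_orth (a b : X) (C : ℝ) (ha : ‖a‖ ≤ C) (hb : ‖b‖ ≤ C)
    (h1 : star a * b = 0) (h2 : a * star b = 0) : ‖a + b‖ ≤ C := by
  have := norm_sum_orth (Finset.univ : Finset (Fin 2)) ![a, b] C ((norm_nonneg _).trans ha) ?_ ?_
  · simpa using this
  · intro i _; fin_cases i <;> simpa
  · have h1' : star b * a = 0 := by simpa using congrArg star h1
    have h2' : b * star a = 0 := by simpa using congrArg star h2
    intro i _ j _ hij
    fin_cases i <;> fin_cases j <;> simp_all

lemma norm_compress_compl (P z : X) (hs : star P = P) (hP : P * P = P) :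
    ‖z - P * z - z * P + P * z * P‖ ≤ ‖z‖ := by
  have e : ((z - P * z - z * P + P * z * P : X) : Unitization ℂ X)
      = (1 - (P : Unitization ℂ X)) * z * (1 - (P : Unitization ℂ X)) := by
    simp only [Unitization.inr_add, Unitization.inr_sub, Unitization.inr_mul]
    noncomm_ring
  have hp : IsStarProjection (1 - (P : Unitization ℂ X)) := by
    apply IsStarProjection.one_sub
    exact ⟨by rw [IsIdempotentElem, ← Unitization.inr_mul, hP],
      by rw [IsSelfAdjoint, ← Unitization.inr_star, hs]⟩
  have hn : ‖1 - (P : Unitization ℂ X)‖ ≤ 1 := hp.norm_le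
  rw [← Unitization.norm_inr (𝕜 := ℂ) (A := X), e]
  calc _ ≤ ‖1 - (P : Unitization ℂ X)‖ * ‖(z : Unitization ℂ X)‖ * ‖1 - (P : Unitization ℂ X)‖ :=
        norm_mul₃_le
    _ ≤ 1 * ‖(z : Unitization ℂ X)‖ * 1 := by gcongr
    _ = ‖z‖ := by rw [one_mul, mul_one, Unitization.norm_inr]
end Norms

section Reps
variable {X : Type*} [NonUnitalCStarAlgebra X]

lemma pisom {w p : X} (hp : p * p = p) (hs : star p = p) (h : star w * w = p) : w * p = w := by
  have : star (w * p - w) * (w * p - w) = 0 := by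
    rw [star_sub, star_mul, hs, sub_mul, mul_sub, mul_sub, h]
    rw [show p * star w * (w * p) = p * (star w * w) * p by simp only [mul_assoc],
      show p * star w * w = p * (star w * w) by simp only [mul_assoc],
      show star w * (w * p) = (star w * w) * p by simp only [mul_assoc], h, hp, hp]
    abel
  exact sub_eq_zero.1 ((CStarRing.star_mul_self_eq_zero_iff _).1 this)

/-- A choice of representatives of the equivalence classes of minimal projections. -/
lemma exists_reps (B : NonUnitalStarSubalgebra ℂ X) :
    ∃ rep : X → X, (∀ p, IsMinProj B p → IsMinProj B (rep p) ∧
        ∃ w ∈ B, star w * w = rep p ∧ w * star w = p) ∧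
      ∀ p p', IsMinProj B p → IsMinProj B p' → rep p ≠ rep p' →
        ∀ x ∈ B, rep p * x * rep p' = 0 := by
  classical
  let S : Setoid {p : X // IsMinProj B p} :=
    { r := fun p p' => ∃ w ∈ B, star w * w = (p' : X) ∧ w * star w = (p : X)
      iseqv := by
        refine ⟨fun p => ⟨p, p.2.mem, ?_, ?_⟩, ?_, ?_⟩
        · rw [p.2.sa, p.2.idem]
        · rw [p.2.sa, p.2.idem]
        · rintro p p' ⟨w, hw, h1, h2⟩
          exact ⟨star w, star_mem hw, by rwa [star_star], by rwa [star_star]⟩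
        · rintro p p' p'' ⟨w, hw, h1, h2⟩ ⟨z, hz, h3, h4⟩
          refine ⟨w * z, mul_mem hw hz, ?_, ?_⟩
          · rw [star_mul, mul_assoc, ← mul_assoc (star w), h1, ← h4, mul_assoc, h3, ← mul_assoc,
              h3, p''.2.idem]
          · rw [star_mul, mul_assoc, ← mul_assoc z, h4, ← h1, mul_assoc, h2, ← mul_assoc,
              h2, p.2.idem] }
  let rep : X → X := fun p => if h : IsMinProj B p then ((⟦⟨p, h⟩⟧ : Quotient S).out : X) else 0
  have hrep : ∀ p (h : IsMinProj B p), rep p = ((⟦⟨p, h⟩⟧ : Quotient S).out : X) := fun p h => by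
    simp only [rep, dif_pos h]
  refine ⟨rep, ?_, ?_⟩
  · intro p h
    rw [hrep p h]
    refine ⟨(⟦⟨p, h⟩⟧ : Quotient S).out.2, ?_⟩
    obtain ⟨w, hw, h1, h2⟩ := Quotient.exact (s := S) ((⟦⟨p, h⟩⟧ : Quotient S).out_eq)
    exact ⟨star w, star_mem hw, by rwa [star_star], by rwa [star_star]⟩
  · intro p p' h h' hne x hx
    rw [hrep p h, hrep p' h'] at hne ⊢
    by_contra hcon
    obtain ⟨w, hw, h1, h2⟩ := min_equiv (⟦⟨p, h⟩⟧ : Quotient S).out.2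
      (⟦⟨p', h'⟩⟧ : Quotient S).out.2 hx hcon
    apply hne
    have : (⟦⟨p, h⟩⟧ : Quotient S) = ⟦⟨p', h'⟩⟧ := by
      rw [← (⟦⟨p, h⟩⟧ : Quotient S).out_eq, ← (⟦⟨p', h'⟩⟧ : Quotient S).out_eq]
      exact Quotient.sound (s := S) ⟨w, hw, h1, h2⟩
    rw [this]

lemma exists_decomp_isom (B : NonUnitalStarSubalgebra ℂ X) [FiniteDimensional ℂ B]
    (rep : X → X) (hrep : ∀ p, IsMinProj B p → IsMinProj B (rep p) ∧
        ∃ w ∈ B, star w * w = rep p ∧ w * star w = p) {q : X}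
    (hq : q ∈ B) (hs : star q = q) (hqq : q * q = q) :
    ∃ (n : ℕ) (g : ℕ → X), (∀ c, g c ∈ B) ∧ (∀ c, n ≤ c → g c = 0) ∧
      (∀ c c', c ≠ c' → star (g c) * g c' = 0) ∧ (∀ c, q * g c = g c) ∧
      (∑ c ∈ Finset.range n, g c * star (g c) = q) ∧
      ∀ c, g c = 0 ∨ ∃ p, IsMinProj B p ∧ star (g c) * g c = rep p := by
  classical
  obtain ⟨s, h1, h2, h3⟩ := min_decomp B hq hs hqq
  have hw : ∀ p : s, ∃ w ∈ B, star w * w = rep p ∧ w * star w = p :=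
    fun p => (hrep p (h1 p p.2)).2
  choose w hwB hw1 hw2 using hw
  have hpw : ∀ p : s, (p : X) * w p = w p := by
    intro p
    have hr := (hrep p (h1 p p.2)).1
    rw [← hw2, mul_assoc, hw1, pisom hr.idem hr.sa (hw1 p)]
  let e := s.equivFin
  let g : ℕ → X := fun c => if h : c < s.card then w (e.symm ⟨c, h⟩) else 0
  have gpos : ∀ c (h : c < s.card), g c = w (e.symm ⟨c, h⟩) := fun c h => dif_pos h
  have gneg : ∀ c, ¬ c < s.card → g c = 0 := fun c h => dif_neg h
  refine ⟨s.card, g, ?_, fun c hc => gneg c (not_lt.2 hc), ?_, ?_, ?_, ?_⟩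
  · intro c
    by_cases h : c < s.card
    · rw [gpos c h]; exact hwB _
    · rw [gneg c h]; exact zero_mem B
  · intro c c' hcc
    by_cases h : c < s.card
    · by_cases h' : c' < s.card
      · rw [gpos c h, gpos c' h']
        set a := e.symm ⟨c, h⟩ with ha
        set b := e.symm ⟨c', h'⟩ with hb
        have hab : (a : X) ≠ b := by
          intro hab
          have := Subtype.ext hab
          rw [ha, hb, e.symm.apply_eq_iff_eq] at this
          exact hcc (by simpa using this)
        rw [← hpw a, ← hpw b, star_mul, (h1 a a.2).sa, mul_assoc, ← mul_assoc (a : X),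
          h2 a a.2 b b.2 hab]
        simp
      · rw [gneg c' h', mul_zero]
    · rw [gneg c h, star_zero, zero_mul]
  · intro c
    by_cases h : c < s.card
    · rw [gpos c h]
      set a := e.symm ⟨c, h⟩ with ha
      rw [← hpw a, ← mul_assoc, (decomp_mul h1 h2 h3 a.2).2]
    · rw [gneg c h, mul_zero]
  · rw [Finset.sum_range, ← h3, ← Finset.sum_coe_sort s, ← Equiv.sum_comp e.symm]
    refine Finset.sum_congr rfl fun i _ => ?_
    rw [gpos i i.2, hw2]
  · intro c
    by_cases h : c < s.card
    · right
      rw [gpos c h]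
      exact ⟨_, h1 _ (e.symm ⟨c, h⟩).2, hw1 _⟩
    · exact Or.inl (gneg c h)
end Reps
end AFB

namespace AFB
open scoped Matrix.Norms.L2Operator

section Coef
variable {X : Type*} [NonUnitalCStarAlgebra X]

open Classical in
/-- The coefficient `c` with `z = c q` (zero if `q = 0` or there is none). -/
def coef (q z : X) : ℂ := if h : q ≠ 0 ∧ ∃ c : ℂ, z = c • q then h.2.choose else 0

lemma coef_smul {q : X} (hq : q ≠ 0) (c : ℂ) : coef q (c • q) = c := by
  have h : q ≠ 0 ∧ ∃ c' : ℂ, c • q = c' • q := ⟨hq, c, rfl⟩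
  rw [coef, dif_pos h]
  have := h.2.choose_spec
  exact (smul_left_injective ℂ hq this).symm

lemma coef_eq {q z : X} {c : ℂ} (hq : q ≠ 0) (h : z = c • q) : coef q z = c := by
  rw [h, coef_smul hq]

lemma coef_zero_left (z : X) : coef 0 z = 0 := by
  rw [coef, dif_neg]; simp

lemma coef_zero (q : X) : coef q 0 = 0 := by
  by_cases hq : q = 0
  · rw [hq, coef_zero_left]
  · exact coef_eq hq (by simp)

lemma coef_spec {q z : X} (h : ∃ c : ℂ, z = c • q) : z = coef q z • q := by
  obtain ⟨c, hc⟩ := h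
  by_cases hq : q = 0
  · rw [hc, hq]; simp
  · rw [coef_eq hq hc, hc]
end Coef

section Tau
variable {Y : Type*} [NonUnitalCStarAlgebra Y] {J : Type*} [Fintype J] [DecidableEq J]

/-- An orthonormal family of partial isometries with common minimal initial projection `Q`. -/
structure ONSys (S : NonUnitalStarSubalgebra ℂ Y) (Q : Y) (u : J → Y) : Prop where
  Qmin : IsMinProj S Q
  mem : ∀ s, u s ∈ S
  on : ∀ s s', star (u s) * u s' = if s = s' then Q else 0

lemma ONSys.mulQ {S : NonUnitalStarSubalgebra ℂ Y} {Q : Y} {u : J → Y} (h : ONSys S Q u) (s : J) :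
    u s * Q = u s :=
  pisom h.Qmin.idem h.Qmin.sa (by rw [h.on, if_pos rfl])

/-- The map `M ↦ ∑ M_{ab} u_a u_b*`. -/
def tau (u : J → Y) (M : Matrix J J ℂ) : Y := ∑ a, ∑ b, M a b • (u a * star (u b))

lemma tau_add (u : J → Y) (M N : Matrix J J ℂ) : tau u (M + N) = tau u M + tau u N := by
  simp only [tau, Matrix.add_apply, add_smul, Finset.sum_add_distrib]

lemma tau_smul (u : J → Y) (c : ℂ) (M : Matrix J J ℂ) : tau u (c • M) = c • tau u M := by
  simp only [tau, Matrix.smul_apply, Finset.smul_sum, smul_smul, smul_eq_mul]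

lemma tau_star (u : J → Y) (M : Matrix J J ℂ) : tau u (star M) = star (tau u M) := by
  simp only [tau, star_sum, star_smul, star_mul, star_star, Matrix.star_apply]
  rw [Finset.sum_comm]

variable {S : NonUnitalStarSubalgebra ℂ Y} {Q : Y} {u : J → Y}

lemma tau_mem (h : ONSys S Q u) (M : Matrix J J ℂ) : tau u M ∈ S :=
  sum_mem fun a _ => sum_mem fun b _ =>
    SMulMemClass.smul_mem _ (mul_mem (h.mem a) (star_mem (h.mem b)))

lemma tau_mul_u (h : ONSys S Q u) (M : Matrix J J ℂ) (b : J) :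
    tau u M * u b = ∑ a, M a b • u a := by
  simp only [tau, Finset.sum_mul]
  refine Finset.sum_congr rfl fun a _ => ?_
  rw [Finset.sum_eq_single_of_mem b (Finset.mem_univ b)]
  · rw [smul_mul_assoc, mul_assoc, h.on, if_pos rfl, h.mulQ]
  · intro c _ hc
    rw [smul_mul_assoc, mul_assoc, h.on, if_neg hc]; simp

lemma tau_mul (h : ONSys S Q u) (M N : Matrix J J ℂ) : tau u (M * N) = tau u M * tau u N := by
  have : tau u M * tau u N = ∑ b, ∑ c, N b c • ((tau u M * u b) * star (u c)) := by
    conv_lhs => rw [show tau u N = ∑ b, ∑ c, N b c • (u b * star (u c)) from rfl]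
    simp only [Finset.mul_sum, mul_smul_comm, mul_assoc]
  rw [this]
  simp only [tau_mul_u h, Finset.sum_mul, Finset.smul_sum, smul_mul_assoc, smul_smul]
  simp only [tau, Matrix.mul_apply, Finset.sum_smul]
  rw [Finset.sum_comm' (t' := Finset.univ) (s' := fun _ => Finset.univ) (by simp)]
  conv_rhs =>
    rw [Finset.sum_comm]
  refine Finset.sum_congr rfl fun c _ => ?_
  rw [Finset.sum_comm]
  refine Finset.sum_congr rfl fun b _ => Finset.sum_congr rfl fun a _ => ?_
  rw [mul_comm]

lemma star_u_tau_u (h : ONSys S Q u) (M : Matrix J J ℂ) (a b : J) :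
    star (u a) * tau u M * u b = M a b • Q := by
  rw [mul_assoc, tau_mul_u h, Finset.mul_sum, Finset.sum_eq_single_of_mem a (Finset.mem_univ a)]
  · rw [mul_smul_comm, h.on, if_pos rfl]
  · intro c _ hc
    rw [mul_smul_comm, h.on, if_neg hc.symm, smul_zero]

/-- `tau` as a star homomorphism. -/
def tauHom (h : ONSys S Q u) : Matrix J J ℂ →⋆ₙₐ[ℂ] Y where
  toFun := tau u
  map_smul' := tau_smul u
  map_zero' := by simp [tau]
  map_add' := tau_add u
  map_mul' := tau_mul h
  map_star' := tau_star u

lemma tau_norm (h : ONSys S Q u) (M : Matrix J J ℂ) : ‖tau u M‖ = ‖M‖ := by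
  refine NonUnitalStarAlgHom.norm_map (tauHom h) ?_ M
  intro M N e
  ext a b
  have e' : tau u M = tau u N := e
  have := star_u_tau_u h M a b
  rw [e', star_u_tau_u h] at this
  exact (smul_left_injective ℂ h.Qmin.ne this).symm

/-- Compression to the coordinates given by `u`. -/
def sig (Q : Y) (u : J → Y) (y : Y) : Matrix J J ℂ :=
  Matrix.of fun a b => coef Q (star (u a) * y * u b)

lemma sig_spec (h : ONSys S Q u) {y : Y} (hy : y ∈ S) (a b : J) :
    star (u a) * y * u b = sig Q u y a b • Q := by
  apply coef_spec
  obtain ⟨c, hc⟩ := h.Qmin.min (star (u a) * y * u b)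
    (mul_mem (mul_mem (star_mem (h.mem a)) hy) (h.mem b))
  refine ⟨c, ?_⟩
  rw [← hc]
  have : Q * star (u a) = star (u a) := by
    conv_rhs => rw [← h.mulQ a, star_mul, h.Qmin.sa]
  simp only [mul_assoc, h.mulQ]
  simp only [← mul_assoc, this]

lemma sig_unique (h : ONSys S Q u) {y : Y} {a b : J} {c : ℂ}
    (e : star (u a) * y * u b = c • Q) : sig Q u y a b = c :=
  coef_eq h.Qmin.ne e

lemma sig_add (h : ONSys S Q u) {y z : Y} (hy : y ∈ S) (hz : z ∈ S) :
    sig Q u (y + z) = sig Q u y + sig Q u z := by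
  ext a b
  apply sig_unique h
  rw [mul_add, add_mul, sig_spec h hy, sig_spec h hz, ← add_smul]; rfl

lemma sig_smul (h : ONSys S Q u) {y : Y} (c : ℂ) (hy : y ∈ S) :
    sig Q u (c • y) = c • sig Q u y := by
  ext a b
  apply sig_unique h
  rw [mul_smul_comm, smul_mul_assoc, sig_spec h hy, smul_smul]; rfl

lemma tau_one_norm (h : ONSys S Q u) : ‖tau u (1 : Matrix J J ℂ)‖ ≤ 1 := by
  rw [tau_norm h]
  have : IsStarProjection (1 : Matrix J J ℂ) := IsStarProjection.one _
  exact this.norm_le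

lemma tau_sig (h : ONSys S Q u) {y : Y} (hy : y ∈ S) :
    tau u (sig Q u y) = tau u 1 * y * tau u 1 := by
  have e1 : tau u (1 : Matrix J J ℂ) = ∑ a, u a * star (u a) := by
    simp only [tau, Matrix.one_apply, ite_smul, one_smul, zero_smul, Finset.sum_ite_eq,
      Finset.mem_univ, if_true]
  rw [e1]
  simp only [Finset.sum_mul, Finset.mul_sum]
  rw [Finset.sum_comm]
  simp only [tau]
  refine Finset.sum_congr rfl fun a _ => Finset.sum_congr rfl fun b _ => ?_
  have : u a * star (u a) * y * (u b * star (u b)) = u a * (star (u a) * y * u b) * star (u b) := by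
    simp only [mul_assoc]
  rw [this, sig_spec h hy, mul_smul_comm, h.mulQ, smul_mul_assoc]

lemma sig_norm (h : ONSys S Q u) {y : Y} (hy : y ∈ S) : ‖sig Q u y‖ ≤ ‖y‖ := by
  rw [← tau_norm h, tau_sig h hy]
  calc _ ≤ ‖tau u (1 : Matrix J J ℂ)‖ * ‖y‖ * ‖tau u (1 : Matrix J J ℂ)‖ := norm_mul₃_le
    _ ≤ 1 * ‖y‖ * 1 := by
      have := tau_one_norm h
      gcongr
    _ = ‖y‖ := by ring
end Tau

section Pinch
variable {J : Type*} [Fintype J] [DecidableEq J]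

open Classical in
lemma pinch_norm {κ : Type*} (f : J → κ) (P : κ → Prop) (M : Matrix J J ℂ) :
    ‖(Matrix.of fun a b => if f a = f b ∧ P (f a) then M a b else 0 : Matrix J J ℂ)‖ ≤ ‖M‖ := by
  let d : κ → Matrix J J ℂ := fun i => Matrix.diagonal fun a => if f a = i then 1 else 0
  have hd : ∀ i, IsStarProjection (d i) := by
    intro i
    constructor
    · simp only [IsIdempotentElem, d, Matrix.diagonal_mul_diagonal]
      congr 1; ext a; split_ifs <;> simp
    · simp only [IsSelfAdjoint, d, Matrix.star_eq_conjTranspose, Matrix.diagonal_conjTranspose]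
      congr 1; ext a; simp only [Pi.star_apply]; split_ifs <;> simp
  have hdd : ∀ i j, i ≠ j → d i * d j = 0 := by
    intro i j hij
    simp only [d, Matrix.diagonal_mul_diagonal]
    rw [← Matrix.diagonal_zero]
    congr 1; ext a
    by_cases h : f a = i
    · simp [h, hij]
    · simp [h]
  have e : (Matrix.of fun a b => if f a = f b ∧ P (f a) then M a b else 0 : Matrix J J ℂ)
      = ∑ i ∈ (Finset.univ.image f).filter P, d i * M * d i := by
    ext a b
    rw [Matrix.sum_apply]
    simp only [d, Matrix.mul_diagonal, Matrix.diagonal_mul, Matrix.of_apply]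
    by_cases h : f a = f b ∧ P (f a)
    · rw [if_pos h, Finset.sum_eq_single_of_mem (f a) (by simp [h.2])]
      · simp [h.1]
      · intro i _ hi; simp [hi.symm]
    · rw [if_neg h]
      refine (Finset.sum_eq_zero fun i hi => ?_).symm
      by_cases h1 : f a = i
      · by_cases h2 : f b = i
        · exact absurd ⟨h1.trans h2.symm, by rw [h1]; exact (Finset.mem_filter.1 hi).2⟩ h
        · simp [h2]
      · simp [h1]
  rw [e]
  refine norm_sum_orth _ _ _ (norm_nonneg _) ?_ ?_
  · intro i _
    have := (hd i).norm_le
    calc _ ≤ ‖d i‖ * ‖M‖ * ‖d i‖ := norm_mul₃_le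
      _ ≤ 1 * ‖M‖ * 1 := by gcongr
      _ = _ := by ring
  · intro i _ j _ hij
    have hs : ∀ i, star (d i) = d i := fun i => (hd i).isSelfAdjoint
    simp only [star_mul, hs]
    constructor
    · rw [show d i * (star M * d i) * (d j * M * d j) = d i * star M * (d i * d j) * M * d j by
        noncomm_ring, hdd i j hij]; simp
    · rw [show d i * M * d i * (d j * (star M * d j)) = d i * M * (d i * d j) * star M * d j by
        noncomm_ring, hdd i j hij]; simp

lemma submatrix_norm {K : Type*} [Fintype K] [DecidableEq K] (f : K → J)
    (hf : Function.Injective f) (M : Matrix J J ℂ) : ‖M.submatrix f f‖ ≤ ‖M‖ := by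
  let V : Matrix J K ℂ := (1 : Matrix J J ℂ).submatrix id f
  have hV : V.conjTranspose * V = 1 := by
    ext a b
    simp [V, Matrix.mul_apply, Matrix.one_apply, hf.eq_iff]
  have hVn : ‖V‖ ≤ 1 := by
    have h1 := Matrix.l2_opNorm_conjTranspose_mul_self V
    have h2 : ‖(1 : Matrix K K ℂ)‖ ≤ 1 := (IsStarProjection.one (Matrix K K ℂ)).norm_le
    rw [hV] at h1
    nlinarith [norm_nonneg V]
  have e : M.submatrix f f = V.conjTranspose * M * V := by
    ext a b
    simp [V, Matrix.mul_apply, Matrix.one_apply]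
  rw [e]
  calc _ ≤ ‖V.conjTranspose * M‖ * ‖V‖ := Matrix.l2_opNorm_mul _ _
    _ ≤ (‖V.conjTranspose‖ * ‖M‖) * ‖V‖ := by gcongr; exact Matrix.l2_opNorm_mul _ _
    _ ≤ (1 * ‖M‖) * 1 := by
      rw [Matrix.l2_opNorm_conjTranspose]; gcongr
    _ = _ := by ring
end Pinch
end AFB

namespace AFB
open scoped Matrix.Norms.L2Operator

section Path
variable {X : Type*} [CStarAlgebra X] {J : Type*} [Fintype J] [DecidableEq J]

/-- A system of partial isometries describing the finite-dimensional algebra `B`. -/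
structure PathSys (B : NonUnitalStarSubalgebra ℂ X) (v : J → X) : Prop where
  mem : ∀ s, v s ∈ B
  orth : ∀ s s', s ≠ s' → star (v s) * v s' = 0
  sum : ∑ s, v s * star (v s) = 1
  off : ∀ x ∈ B, ∀ s s', star (v s) * v s ≠ star (v s') * v s' → star (v s) * x * v s' = 0
  scal : ∀ x ∈ B, ∀ s s', ∃ c : ℂ, star (v s) * x * v s' = c • (star (v s) * v s)

/-- The matrix of `x` in the system `v`. -/
def rho (v : J → X) (x : X) : Matrix J J ℂ :=
  Matrix.of fun a b => coef (star (v a) * v a) (star (v a) * x * v b)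

open Classical in
/-- The block conditional expectation associated with `v`. -/
def EE (v : J → X) (M : Matrix J J ℂ) : X :=
  ∑ a, ∑ b, if star (v a) * v a = star (v b) * v b then M a b • (v a * star (v b)) else 0

variable {B : NonUnitalStarSubalgebra ℂ X} {v : J → X}

lemma PathSys.vq (h : PathSys B v) (s : J) : v s * (star (v s) * v s) = v s := by
  have := congrArg (· * v s) h.sum
  simp only [one_mul, Finset.sum_mul] at this
  rw [Finset.sum_eq_single_of_mem s (Finset.mem_univ s)] at this
  · rw [← mul_assoc, this]
  · intro a _ ha
    rw [mul_assoc, h.orth a s ha, mul_zero]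

lemma PathSys.qv (h : PathSys B v) (s : J) : (star (v s) * v s) * star (v s) = star (v s) := by
  have := congrArg star (h.vq s)
  simpa [mul_assoc] using this

lemma PathSys.qq (h : PathSys B v) (s : J) :
    (star (v s) * v s) * (star (v s) * v s) = star (v s) * v s := by
  rw [mul_assoc, h.vq]

lemma q_zero_iff {w : X} : star w * w = 0 ↔ w = 0 := CStarRing.star_mul_self_eq_zero_iff w

lemma rho_spec (h : PathSys B v) {x : X} (hx : x ∈ B) (a b : J) :
    star (v a) * x * v b = rho v x a b • (star (v a) * v a) :=
  coef_spec (h.scal x hx a b)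

lemma rho_ne (h : PathSys B v) {x : X} (hx : x ∈ B) {a b : J} (hn : rho v x a b ≠ 0) :
    star (v a) * v a = star (v b) * v b := by
  by_contra hc
  apply hn
  simp only [rho, Matrix.of_apply]
  rw [h.off x hx a b hc, coef_zero]

lemma rho_ne_left {x : X} {a b : J} (hn : rho v x a b ≠ 0) : v a ≠ 0 := by
  intro hc
  apply hn
  simp only [rho, Matrix.of_apply]
  rw [hc, mul_zero, coef_zero_left]

lemma rho_ne_right (h : PathSys B v) {x : X} (hx : x ∈ B) {a b : J} (hn : rho v x a b ≠ 0) :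
    v b ≠ 0 := by
  rw [← q_zero_iff.ne, ← rho_ne h hx hn, q_zero_iff.ne]
  exact rho_ne_left hn

lemma rho_add (h : PathSys B v) {x y : X} (hx : x ∈ B) (hy : y ∈ B) :
    rho v (x + y) = rho v x + rho v y := by
  ext a b
  by_cases ha : v a = 0
  · simp [rho, ha, coef_zero_left]
  · apply coef_eq (q_zero_iff.ne.2 ha)
    rw [mul_add, add_mul, rho_spec h hx, rho_spec h hy, ← add_smul]; rfl

lemma rho_smul (h : PathSys B v) (c : ℂ) {x : X} (hx : x ∈ B) :
    rho v (c • x) = c • rho v x := by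
  ext a b
  by_cases ha : v a = 0
  · simp [rho, ha, coef_zero_left]
  · apply coef_eq (q_zero_iff.ne.2 ha)
    rw [mul_smul_comm, smul_mul_assoc, rho_spec h hx, smul_smul]; rfl

lemma rho_zero : rho v (0 : X) = 0 := by
  ext a b; simp [rho, coef_zero]

lemma rho_star (h : PathSys B v) {x : X} (hx : x ∈ B) : rho v (star x) = star (rho v x) := by
  ext a b
  by_cases ha : v a = 0
  · rw [Matrix.star_apply]
    have : rho v x b a = 0 := by
      by_contra hn; exact rho_ne_right h hx hn ha
    rw [this]
    simp [rho, ha, coef_zero_left]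
  · apply coef_eq (q_zero_iff.ne.2 ha)
    rw [Matrix.star_apply]
    have := congrArg star (rho_spec h hx b a)
    simp only [star_mul, star_star, star_smul, ← mul_assoc] at this
    rw [this]
    by_cases hn : rho v x b a = 0
    · rw [hn]; simp
    · rw [rho_ne h hx hn]

lemma mul_expand (h : PathSys B v) {x : X} (hx : x ∈ B) (b : J) :
    x * v b = ∑ a, rho v x a b • v a := by
  calc x * v b = (∑ a, v a * star (v a)) * (x * v b) := by rw [h.sum, one_mul]
    _ = ∑ a, v a * (star (v a) * x * v b) := by
        rw [Finset.sum_mul]; simp only [mul_assoc]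
    _ = _ := by
        refine Finset.sum_congr rfl fun a _ => ?_
        rw [rho_spec h hx, mul_smul_comm, h.vq]

lemma rho_mul (h : PathSys B v) {x y : X} (hx : x ∈ B) (hy : y ∈ B) :
    rho v (x * y) = rho v x * rho v y := by
  ext a b
  by_cases ha : v a = 0
  · rw [Matrix.mul_apply, Finset.sum_eq_zero]
    · simp [rho, ha, coef_zero_left]
    · intro c _
      have : rho v x a c = 0 := by simp [rho, ha, coef_zero_left]
      rw [this, zero_mul]
  · apply coef_eq (q_zero_iff.ne.2 ha)
    rw [mul_assoc, mul_assoc, mul_expand h hy, Finset.mul_sum, Finset.mul_sum, Matrix.mul_apply,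
      Finset.sum_smul]
    refine Finset.sum_congr rfl fun c _ => ?_
    rw [mul_smul_comm, mul_smul_comm, ← mul_assoc, rho_spec h hx, smul_smul, mul_comm]

lemma EE_rho (h : PathSys B v) {x : X} (hx : x ∈ B) : EE v (rho v x) = x := by
  calc _ = ∑ a, ∑ b, rho v x a b • (v a * star (v b)) := by
        refine Finset.sum_congr rfl fun a _ => Finset.sum_congr rfl fun b _ => ?_
        split_ifs with hq
        · rfl
        · have : rho v x a b = 0 := by
            by_contra hn; exact hq (rho_ne h hx hn)
          rw [this, zero_smul]
    _ = ∑ b, (x * v b) * star (v b) := by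
        rw [Finset.sum_comm]
        refine Finset.sum_congr rfl fun b _ => ?_
        rw [mul_expand h hx, Finset.sum_mul]
        simp only [smul_mul_assoc]
    _ = x := by
        simp only [mul_assoc]
        rw [← Finset.mul_sum, h.sum, mul_one]

lemma EE_mem (h : PathSys B v) (M : Matrix J J ℂ) : EE v M ∈ B := by
  refine sum_mem fun a _ => sum_mem fun b _ => ?_
  split_ifs
  · exact SMulMemClass.smul_mem _ (mul_mem (h.mem a) (star_mem (h.mem b)))
  · exact zero_mem _

lemma EE_add (M N : Matrix J J ℂ) : EE v (M + N) = EE v M + EE v N := by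
  simp only [EE, ← Finset.sum_add_distrib]
  refine Finset.sum_congr rfl fun a _ => Finset.sum_congr rfl fun b _ => ?_
  split_ifs
  · rw [Matrix.add_apply, add_smul]
  · simp

lemma EE_smul (c : ℂ) (M : Matrix J J ℂ) : EE v (c • M) = c • EE v M := by
  simp only [EE, Finset.smul_sum]
  refine Finset.sum_congr rfl fun a _ => Finset.sum_congr rfl fun b _ => ?_
  split_ifs
  · rw [Matrix.smul_apply, smul_smul, smul_eq_mul]
  · simp

lemma EE_star (M : Matrix J J ℂ) : EE v (star M) = star (EE v M) := by
  simp only [EE, star_sum]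
  rw [Finset.sum_comm]
  refine Finset.sum_congr rfl fun a _ => Finset.sum_congr rfl fun b _ => ?_
  by_cases hq : star (v a) * v a = star (v b) * v b
  · rw [if_pos hq, if_pos hq.symm]; simp [Matrix.star_apply]
  · rw [if_neg hq, if_neg (Ne.symm hq)]; simp

open Classical in
lemma star_EE (h : PathSys B v) (M : Matrix J J ℂ) (a b : J) :
    star (v a) * EE v M * v b = (if star (v a) * v a = star (v b) * v b ∧ star (v a) * v a ≠ 0
      then M a b else 0) • (star (v a) * v a) := by
  simp only [EE, Finset.mul_sum, Finset.sum_mul]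
  rw [Finset.sum_eq_single_of_mem a (Finset.mem_univ a),
    Finset.sum_eq_single_of_mem b (Finset.mem_univ b)]
  · by_cases hq : star (v a) * v a = star (v b) * v b
    · rw [if_pos hq]
      by_cases h0 : star (v a) * v a = 0
      · rw [q_zero_iff] at h0; simp [h0]
      · rw [if_pos ⟨hq, h0⟩, mul_smul_comm, smul_mul_assoc]
        congr 1
        calc _ = (star (v a) * v a) * (star (v b) * v b) := by simp only [mul_assoc]
          _ = _ := by rw [← hq, h.qq]
    · rw [if_neg hq, if_neg (fun hh => hq hh.1)]; simp
  · intro c _ hc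
    split_ifs
    · rw [mul_smul_comm, smul_mul_assoc, mul_assoc, mul_assoc, h.orth c b hc]; simp
    · simp
  · intro c _ hc
    refine Finset.sum_eq_zero fun d _ => ?_
    split_ifs
    · rw [mul_smul_comm, ← mul_assoc, h.orth a c hc.symm]; simp
    · simp

lemma rho_norm [FiniteDimensional ℂ B] (h : PathSys B v) {x : X} (hx : x ∈ B) :
    ‖rho v x‖ = ‖x‖ := by
  have hcl : IsClosed (B : Set X) :=
    (Submodule.closed_of_finiteDimensional (B.toNonUnitalSubalgebra.toSubmodule))
  let f : B →⋆ₙₐ[ℂ] Matrix J J ℂ :=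
    { toFun := fun x => rho v (x : X)
      map_smul' := fun c x => rho_smul h c x.2
      map_zero' := rho_zero
      map_add' := fun x y => rho_add h x.2 y.2
      map_mul' := fun x y => rho_mul h x.2 y.2
      map_star' := fun x => rho_star h x.2 }
  have hinj : Function.Injective f := by
    intro x y e
    have e' : rho v (x : X) = rho v (y : X) := e
    apply Subtype.ext
    rw [← EE_rho h x.2, e', EE_rho h y.2]
  exact NonUnitalStarAlgHom.norm_map f hinj ⟨x, hx⟩

lemma EE_norm [FiniteDimensional ℂ B] (h : PathSys B v) (M : Matrix J J ℂ) :
    ‖EE v M‖ ≤ ‖M‖ := by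
  classical
  rw [← rho_norm h (EE_mem h M)]
  refine le_trans (le_of_eq ?_) (pinch_norm (fun a => star (v a) * v a) (· ≠ 0) M)
  congr 1
  ext a b
  by_cases ha : v a = 0
  · simp [rho, ha, coef_zero_left]
  · refine coef_eq (q_zero_iff.ne.2 ha) ?_
    rw [star_EE h M a b, Matrix.of_apply]
    congr
end Path

section StageDef
variable {X Y : Type*} [CStarAlgebra X] [NonUnitalCStarAlgebra Y]

/-- One stage of the approximate intertwining. -/
structure Stage (B : NonUnitalStarSubalgebra ℂ X) (S : NonUnitalStarSubalgebra ℂ Y) where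
  J : Type
  [fin : Fintype J]
  [dec : DecidableEq J]
  v : J → X
  Q : Y
  u : J → Y
  φ : X → Y
  path : PathSys B v
  on : ONSys S Q u
  mem : ∀ x ∈ B, φ x ∈ S
  add : ∀ x ∈ B, ∀ y ∈ B, φ (x + y) = φ x + φ y
  smul : ∀ (c : ℂ), ∀ x ∈ B, φ (c • x) = c • φ x
  star_map : ∀ x ∈ B, φ (star x) = star (φ x)
  norm_le : ∀ x ∈ B, ‖φ x‖ ≤ ‖x‖
  act : ∀ x ∈ B, ∀ s, v s ≠ 0 → φ x * u s = ∑ s', rho v x s' s • u s'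

attribute [instance] Stage.fin Stage.dec

variable {B : NonUnitalStarSubalgebra ℂ X} {S : NonUnitalStarSubalgebra ℂ Y}

/-- The left inverse of the stage map. -/
def Stage.psi (st : Stage B S) (y : Y) : X := EE st.v (sig st.Q st.u y)

lemma Stage.psi_phi (st : Stage B S) {x : X} (hx : x ∈ B) : st.psi (st.φ x) = x := by
  rw [Stage.psi]
  conv_rhs => rw [← EE_rho st.path hx]
  simp only [EE]
  refine Finset.sum_congr rfl fun a _ => Finset.sum_congr rfl fun b _ => ?_
  split_ifs with hq
  · by_cases hb : st.v b = 0
    · simp [hb]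
    · congr 1
      apply sig_unique st.on
      rw [mul_assoc, st.act x hx b hb, Finset.mul_sum,
        Finset.sum_eq_single_of_mem a (Finset.mem_univ a)]
      · rw [mul_smul_comm, st.on.on, if_pos rfl]
      · intro c _ hc
        rw [mul_smul_comm, st.on.on, if_neg hc.symm, smul_zero]
  · rfl

lemma Stage.psi_add (st : Stage B S) {y z : Y} (hy : y ∈ S) (hz : z ∈ S) :
    st.psi (y + z) = st.psi y + st.psi z := by
  simp only [Stage.psi, sig_add st.on hy hz, EE_add]

lemma Stage.psi_smul (st : Stage B S) (c : ℂ) {y : Y} (hy : y ∈ S) :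
    st.psi (c • y) = c • st.psi y := by
  simp only [Stage.psi, sig_smul st.on c hy, EE_smul]

lemma Stage.psi_norm [FiniteDimensional ℂ B] (st : Stage B S) {y : Y} (hy : y ∈ S) :
    ‖st.psi y‖ ≤ ‖y‖ :=
  (EE_norm st.path _).trans (sig_norm st.on hy)

end StageDef
end AFB

namespace AFB
open scoped Matrix.Norms.L2Operator

section Refine
variable {X : Type*} [CStarAlgebra X] {J : Type*} [Fintype J] [DecidableEq J]
  {B B' : NonUnitalStarSubalgebra ℂ X} {v : J → X}

/-- Data refining a path system to a larger algebra. -/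
structure Refi (B' : NonUnitalStarSubalgebra ℂ X) (v : J → X) {N : ℕ} (g : J → Fin N → X)
    (τ : J → J) : Prop where
  mem : ∀ s c, g s c ∈ B'
  orth : ∀ s c c', c ≠ c' → star (g s c) * g s c' = 0
  qg : ∀ s c, star (v s) * v s * g s c = g s c
  sum : ∑ c, g s c * star (g s c) = star (v s) * v s
  tau : ∀ s s', τ s = τ s' ↔ star (v s) * v s = star (v s') * v s'
  dep : ∀ s s', τ s = τ s' → g s = g s'
  off : ∀ x ∈ B', ∀ s s' c c', star (g s c) * g s c ≠ star (g s' c') * g s' c' →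
    star (g s c) * x * g s' c' = 0
  scal : ∀ x ∈ B', ∀ s s' c c', ∃ k : ℂ, star (g s c) * x * g s' c' = k • (star (g s c) * g s c)

lemma exists_refi [FiniteDimensional ℂ B'] (h : PathSys B v) (hB : B ≤ B') :
    ∃ (N : ℕ) (_ : 0 < N) (g : J → Fin N → X) (τ : J → J), Refi B' v g τ := by
  classical
  obtain ⟨rep, hrep, hrep2⟩ := exists_reps B'
  let q : J → X := fun s => star (v s) * v s
  have hd := fun s : J => exists_decomp_isom B' rep hrep (q := q s)
    (hB (mul_mem (star_mem (h.mem s)) (h.mem s))) (by simp [q]) (h.qq s)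
  choose n G hG1 hG2 hG3 hG4 hG5 hG6 using hd
  have hτ : ∀ s, ∃ t, q t = q s ∧ ∀ s', q s' = q s → True := fun s => ⟨s, rfl, fun _ _ => trivial⟩
  let pick : X → J → J := fun x s => if hx : ∃ t, q t = x then hx.choose else s
  let τ : J → J := fun s => pick (q s) s
  have hτ1 : ∀ s, q (τ s) = q s := by
    intro s
    have hx : ∃ t, q t = q s := ⟨s, rfl⟩
    simp only [τ, pick, dif_pos hx]
    exact hx.choose_spec
  have hτ2 : ∀ s s', q s = q s' → τ s = τ s' := by
    intro s s' e
    have hx : ∃ t, q t = q s' := ⟨s', rfl⟩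
    simp only [τ, pick, e, dif_pos hx]
  let N := (Finset.univ.sup n) + 1
  have hN : ∀ s, n s ≤ N := fun s => (Finset.le_sup (Finset.mem_univ s)).trans (Nat.le_succ _)
  have hz : ∀ s c, star (G s c) * G s c = 0 → G s c = 0 := fun s c hh => q_zero_iff.1 hh
  have key : ∀ x ∈ B', ∀ s s' c c', G s c ≠ 0 → G s' c' ≠ 0 →
      ∃ p p', IsMinProj B' p ∧ IsMinProj B' p' ∧ star (G s c) * G s c = rep p ∧
        star (G s' c') * G s' c' = rep p' ∧
        star (G s c) * x * G s' c' = rep p * (star (G s c) * x * G s' c') * rep p' := by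
    intro x hx s s' c c' h1 h2
    obtain ⟨p, hp, e⟩ := (hG6 s c).resolve_left h1
    obtain ⟨p', hp', e'⟩ := (hG6 s' c').resolve_left h2
    refine ⟨p, p', hp, hp', e, e', ?_⟩
    have m := (hrep p hp).1
    have m' := (hrep p' hp').1
    have a1 := pisom m.idem m.sa e
    have a2 := pisom m'.idem m'.sa e'
    have a3 := congrArg star a1
    rw [star_mul, m.sa] at a3
    simp only [mul_assoc, a2]
    simp only [← mul_assoc, a3]
  have hoff : ∀ x ∈ B', ∀ s s' c c', star (G s c) * G s c ≠ star (G s' c') * G s' c' →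
      star (G s c) * x * G s' c' = 0 := by
    intro x hx s s' c c' hne
    by_cases h1 : G s c = 0
    · simp [h1]
    by_cases h2 : G s' c' = 0
    · simp [h2]
    obtain ⟨p, p', hp, hp', e, e', e3⟩ := key x hx s s' c c' h1 h2
    rw [e3]
    apply hrep2 p p' hp hp'
    · rwa [← e, ← e']
    · exact mul_mem (mul_mem (star_mem (hG1 _ _)) hx) (hG1 _ _)
  refine ⟨N, Nat.succ_pos _, fun s c => G (τ s) c, τ, ?_⟩
  constructor
  · exact fun s c => hG1 _ _
  · exact fun s c c' hc => hG3 _ _ _ (fun hh => hc (Fin.ext hh))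
  · intro s c
    have := hG4 (τ s) c
    rwa [hτ1] at this
  · intro s
    rw [Fin.sum_univ_eq_sum_range (fun c => G (τ s) c * star (G (τ s) c)),
      Finset.eventually_constant_sum (N := n (τ s)) _ (hN _), hG5, hτ1]
    intro c hc
    rw [hG2 _ _ hc, zero_mul]
  · intro s s'
    refine ⟨fun e => ?_, fun e => hτ2 _ _ e⟩
    have := hτ1 s
    rw [e, hτ1] at this
    exact this.symm
  · intro s s' e
    simp only [e]
  · exact fun x hx s s' c c' hne => hoff x hx _ _ _ _ hne
  · intro x hx s s' c c'
    by_cases hne : star (G (τ s) c) * G (τ s) c = star (G (τ s') c') * G (τ s') c'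
    · by_cases h1 : G (τ s) c = 0
      · exact ⟨0, by simp [h1]⟩
      by_cases h2 : G (τ s') c' = 0
      · exact ⟨0, by simp [h2]⟩
      obtain ⟨p, p', hp, hp', e, e', e3⟩ := key x hx (τ s) (τ s') c c' h1 h2
      rw [e3, e]
      rw [show rep p' = rep p by rw [← e, hne, e']]
      exact (hrep p hp).1.min _ (mul_mem (mul_mem (star_mem (hG1 _ _)) hx) (hG1 _ _))
    · exact ⟨0, by rw [hoff x hx _ _ _ _ hne, zero_smul]⟩

variable {N : ℕ} {g : J → Fin N → X} {τ : J → J}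

/-- The refined system. -/
def vv (v : J → X) (g : J → Fin N → X) : J × Fin N → X := fun a => v a.1 * g a.1 a.2

lemma Refi.gq (r : Refi B' v g τ) (s : J) (c : Fin N) :
    star (g s c) * (star (v s) * v s) = star (g s c) := by
  have := congrArg star (r.qg s c)
  simpa [mul_assoc] using this

lemma vv_q (r : Refi B' v g τ) (s : J) (c : Fin N) :
    star (vv v g (s, c)) * vv v g (s, c) = star (g s c) * g s c := by
  simp only [vv, star_mul]
  rw [show star (g s c) * star (v s) * (v s * g s c) = star (g s c) * (star (v s) * v s * g s c) by
    simp only [mul_assoc], r.qg]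

lemma vv_ne (r : Refi B' v g τ) {s : J} {c : Fin N} : vv v g (s, c) = 0 ↔ g s c = 0 := by
  rw [← q_zero_iff, vv_q r, q_zero_iff]

lemma vv_path (h : PathSys B v) (hB : B ≤ B') (r : Refi B' v g τ) : PathSys B' (vv v g) := by
  constructor
  · exact fun s => mul_mem (hB (h.mem _)) (r.mem _ _)
  · rintro ⟨s, c⟩ ⟨s', c'⟩ hne
    have e : star (vv v g (s, c)) * vv v g (s', c') = star (g s c) * (star (v s) * v s') * g s' c' := by
      simp only [vv, star_mul, mul_assoc]
    rw [e]
    by_cases hs : s = s'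
    · subst hs
      rw [r.gq, r.orth]
      rintro rfl; exact hne rfl
    · rw [h.orth _ _ hs]; simp
  · rw [Fintype.sum_prod_type]
    rw [← h.sum]
    refine Finset.sum_congr rfl fun s _ => ?_
    rw [show v s * star (v s) = v s * (star (v s) * v s) * star (v s) by rw [h.vq],
      ← r.sum (s := s)]
    rw [Finset.mul_sum, Finset.sum_mul]
    simp only [vv, star_mul, mul_assoc]
  · rintro x hx ⟨s, c⟩ ⟨s', c'⟩ hne
    rw [vv_q r, vv_q r] at hne
    have := r.off (star (v s) * x * v s')
      (mul_mem (mul_mem (star_mem (hB (h.mem _))) hx) (hB (h.mem _))) s s' c c' hne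
    simpa only [vv, star_mul, mul_assoc] using this
  · rintro x hx ⟨s, c⟩ ⟨s', c'⟩
    rw [vv_q r]
    have := r.scal (star (v s) * x * v s')
      (mul_mem (mul_mem (star_mem (hB (h.mem _))) hx) (hB (h.mem _))) s s' c c'
    simpa only [vv, star_mul, mul_assoc] using this

/-- Compatibility of the two matrix pictures. -/
lemma rho_vv (h : PathSys B v) (r : Refi B' v g τ) {x : X} (hx : x ∈ B)
    (s s' : J) (c c' : Fin N) (hg : g s c ≠ 0) :
    rho (vv v g) x (s', c') (s, c) = if c' = c then rho v x s' s else 0 := by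
  have e : star (vv v g (s', c')) * x * vv v g (s, c) =
      rho v x s' s • (star (g s' c') * g s c) := by
    have : star (vv v g (s', c')) * x * vv v g (s, c)
      = star (g s' c') * (star (v s') * x * v s) * g s c := by
      simp only [vv, star_mul, mul_assoc]
    rw [this, rho_spec h hx, mul_smul_comm, r.gq, smul_mul_assoc]
  simp only [rho, Matrix.of_apply]
  rw [e]
  by_cases h0 : rho v x s' s = 0
  · rw [h0, zero_smul, coef_zero]
    simp only [rho, Matrix.of_apply] at h0
    rw [h0, ite_self]
  · have hq := rho_ne h hx h0
    have hgg := r.dep s' s ((r.tau s' s).2 hq)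
    rw [vv_q r]
    split_ifs with hc
    · subst hc
      rw [hgg]
      exact coef_eq (q_zero_iff.ne.2 hg) rfl
    · rw [hgg, r.orth s c' c hc, smul_zero, coef_zero]
end Refine

section Step
variable {X Y : Type*} [CStarAlgebra X] [NonUnitalCStarAlgebra Y]
variable {B B' : NonUnitalStarSubalgebra ℂ X} {S S' : NonUnitalStarSubalgebra ℂ Y}

/-- Refined orthonormal system. -/
lemma uu_on {J : Type*} [Fintype J] [DecidableEq J] {Q Q' : Y} {u : J → Y} (h : ONSys S Q u)
    (hS : S ≤ S') {N : ℕ} (τ : J → J)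
    (hQ' : IsMinProj S' Q') (hh : J × Fin N → Y) (h1 : ∀ i, hh i ∈ S') (h2 : ∀ i, Q * hh i = hh i)
    (h3 : ∀ i j, star (hh i) * hh j = if i = j then Q' else 0) :
    ONSys S' Q' (fun a : J × Fin N => u a.1 * hh (τ a.1, a.2)) := by
  refine ⟨hQ', fun s => mul_mem (hS (h.mem _)) (h1 _), ?_⟩
  rintro ⟨s, c⟩ ⟨s', c'⟩
  have e : star (u s * hh (τ s, c)) * (u s' * hh (τ s', c')) =
    star (hh (τ s, c)) * (star (u s) * u s' * hh (τ s', c')) := by simp only [star_mul, mul_assoc]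
  dsimp only
  rw [e, h.on]
  by_cases hs : s = s'
  · subst hs
    rw [if_pos rfl, h2, h3]
    simp
  · simp [hs]

open Classical in
lemma psi_refine {J : Type*} [Fintype J] [DecidableEq J] {Q Q' : Y} {u : J → Y} {v : J → X}
    (hv : PathSys B v) (h : ONSys S Q u)
    (hS : S ≤ S') {N : ℕ} {g : J → Fin N → X} {τ : J → J} (r : Refi B' v g τ)
    (hQ' : IsMinProj S' Q') (hh : J × Fin N → Y) (h1 : ∀ i, hh i ∈ S') (h2 : ∀ i, Q * hh i = hh i)
    (h3 : ∀ i j, star (hh i) * hh j = if i = j then Q' else 0) {y : Y} (hy : y ∈ S) :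
    EE (vv v g) (sig Q' (fun a : J × Fin N => u a.1 * hh (τ a.1, a.2)) y) = EE v (sig Q u y) := by
  have hon := uu_on h hS τ hQ' hh h1 h2 h3
  have hsig : ∀ s c s' c', sig Q' (fun a : J × Fin N => u a.1 * hh (τ a.1, a.2)) y (s, c) (s', c')
      = if τ s = τ s' ∧ c = c' then sig Q u y s s' else 0 := by
    intro s c s' c'
    apply sig_unique hon
    have e : star (u s * hh (τ s, c)) * y * (u s' * hh (τ s', c')) =
      star (hh (τ s, c)) * (star (u s) * y * u s') * hh (τ s', c') := by
        simp only [star_mul, mul_assoc]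
    dsimp only
    rw [e, sig_spec h hy, mul_smul_comm, smul_mul_assoc, mul_assoc, h2, h3]
    simp only [Prod.mk.injEq]
    split_ifs <;> simp
  simp only [EE, Fintype.sum_prod_type]
  refine Finset.sum_congr rfl fun s _ => ?_
  rw [Finset.sum_comm]
  refine Finset.sum_congr rfl fun s' _ => ?_
  by_cases hq : star (v s) * v s = star (v s') * v s'
  · have ht := (r.tau s s').2 hq
    have hg := r.dep s s' ht
    rw [if_pos hq]
    calc _ = ∑ c, sig Q u y s s' • (v s * (g s c * star (g s c)) * star (v s')) := by
          refine Finset.sum_congr rfl fun c _ => ?_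
          rw [Finset.sum_eq_single_of_mem c (Finset.mem_univ c)]
          · rw [hsig, if_pos (show τ s = τ s' ∧ c = c from ⟨ht, rfl⟩), vv_q r, vv_q r, hg, if_pos rfl]
            simp only [vv, star_mul, mul_assoc, hg]
          · intro c' _ hc
            rw [hsig, if_neg (show ¬ (τ s = τ s' ∧ c = c') from fun hh => hc hh.2.symm)]
            simp
      _ = sig Q u y s s' • (v s * star (v s')) := by
          rw [← Finset.smul_sum, ← Finset.sum_mul, ← Finset.mul_sum, r.sum (s := s), hv.vq]
  · rw [if_neg hq]
    refine Finset.sum_eq_zero fun c _ => Finset.sum_eq_zero fun c' _ => ?_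
    rw [hsig, if_neg (show ¬ (τ s = τ s' ∧ c = c') from fun hh => hq ((r.tau s s').1 hh.1))]
    simp
end Step
end AFB

namespace AFB
open scoped Matrix.Norms.L2Operator

section Step
variable {X Y : Type*} [CStarAlgebra X] [NonUnitalCStarAlgebra Y]
variable {B B' : NonUnitalStarSubalgebra ℂ X} {S S' : NonUnitalStarSubalgebra ℂ Y}

lemma tau_eq_sum {J : Type*} [Fintype J] [DecidableEq J] {Q : Y} {u : J → Y} (h : ONSys S Q u)
    (M : Matrix J J ℂ) : tau u M = ∑ a, (tau u M * u a) * star (u a) := by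
  conv_lhs => rw [tau, Finset.sum_comm]
  refine Finset.sum_congr rfl fun a _ => ?_
  rw [tau_mul_u h, Finset.sum_mul]
  simp only [smul_mul_assoc]

lemma rho_one_apply {J : Type*} [Fintype J] [DecidableEq J] {v : J → X} (h : PathSys B v)
    (a b : J) (hb : v b ≠ 0) : rho v 1 a b = if a = b then 1 else 0 := by
  simp only [rho, Matrix.of_apply, mul_one]
  split_ifs with hab
  · subst hab
    exact coef_eq (q_zero_iff.ne.2 hb) (by simp)
  · rw [h.orth a b hab, coef_zero]

lemma one_mem_path {J : Type*} [Fintype J] [DecidableEq J] {v : J → X} (h : PathSys B v) :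
    (1 : X) ∈ B := by
  rw [← h.sum]
  exact sum_mem fun s _ => mul_mem (h.mem s) (star_mem (h.mem s))

lemma stage_step [FiniteDimensional ℂ B] [FiniteDimensional ℂ B'] (st : Stage B S) (hB : B ≤ B')
    (hS : S ≤ S') {N : ℕ} (hN : 0 < N)
    {g : st.J → Fin N → X} {τ : st.J → st.J} (r : Refi B' st.v g τ) {Q' : Y}
    (hQ' : IsMinProj S' Q') (hh : st.J × Fin N → Y) (h1 : ∀ i, hh i ∈ S')
    (h2 : ∀ i, st.Q * hh i = hh i)
    (h3 : ∀ i j, star (hh i) * hh j = if i = j then Q' else 0) :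
    ∃ st' : Stage B' S', (∀ x ∈ B, st'.φ x = st.φ x) ∧ ∀ y ∈ S, st'.psi y = st.psi y := by
  classical
  have hv := st.path
  have hv' : PathSys B' (vv st.v g) := vv_path hv hB r
  let u' : st.J × Fin N → Y := fun a => st.u a.1 * hh (τ a.1, a.2)
  have hon' : ONSys S' Q' u' := uu_on st.on hS τ hQ' hh h1 h2 h3
  have hone : (1 : X) ∈ B := one_mem_path hv
  have hone' : (1 : X) ∈ B' := one_mem_path hv'
  let pickc : (Fin N → X) → Fin N := fun G => if h : ∃ c, G c ≠ 0 then h.choose else ⟨0, hN⟩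
  have hpick : ∀ s, st.v s ≠ 0 → g s (pickc (g s)) ≠ 0 := by
    intro s hs
    have hex : ∃ c, g s c ≠ 0 := by
      by_contra! hcon
      have := r.sum (s := s)
      simp only [hcon, zero_mul, Finset.sum_const_zero] at this
      exact hs (q_zero_iff.1 this.symm)
    simp only [pickc, dif_pos hex]
    exact hex.choose_spec
  let f : st.J → st.J × Fin N := fun s => (s, pickc (g s))
  have hf : Function.Injective f := fun s s' e => congrArg Prod.fst e
  let E : X → X := fun x => EE st.v ((rho (vv st.v g) x).submatrix f f)
  have hEm : ∀ x, E x ∈ B := fun x => EE_mem hv _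
  have hEadd : ∀ x ∈ B', ∀ y ∈ B', E (x + y) = E x + E y := by
    intro x hx y hy
    simp only [E]
    rw [rho_add hv' hx hy, ← EE_add]; rfl
  have hEsmul : ∀ (c : ℂ), ∀ x ∈ B', E (c • x) = c • E x := by
    intro c x hx
    simp only [E]
    rw [rho_smul hv' c hx, ← EE_smul]; rfl
  have hEstar : ∀ x ∈ B', E (star x) = star (E x) := by
    intro x hx
    simp only [E]
    rw [rho_star hv' hx, ← EE_star]; rfl
  have hEnorm : ∀ x ∈ B', ‖E x‖ ≤ ‖x‖ := by
    intro x hx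
    calc _ ≤ _ := EE_norm hv _
      _ ≤ _ := submatrix_norm f hf _
      _ = _ := rho_norm hv' hx
  have hEid : ∀ x ∈ B, E x = x := by
    intro x hx
    conv_rhs => rw [← EE_rho hv hx]
    simp only [E, EE]
    refine Finset.sum_congr rfl fun a _ => Finset.sum_congr rfl fun b _ => ?_
    split_ifs with hq
    · by_cases hb : st.v b = 0
      · simp [hb]
      · congr 1
        have hgg := r.dep a b ((r.tau a b).2 hq)
        simp only [Matrix.submatrix_apply, f]
        rw [rho_vv hv r hx b a _ _ (hpick b hb), hgg, if_pos rfl]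
    · rfl
  let t : X → Y := fun x => tau u' (rho (vv st.v g) x)
  have ht : ∀ x, t x = tau u' (rho (vv st.v g) x) := fun x => rfl
  have htadd : ∀ x ∈ B', ∀ y ∈ B', t (x + y) = t x + t y := by
    intro x hx y hy; rw [ht, rho_add hv' hx hy, tau_add]
  have htsmul : ∀ (c : ℂ), ∀ x ∈ B', t (c • x) = c • t x := by
    intro c x hx; rw [ht, rho_smul hv' c hx, tau_smul]
  have htmul : ∀ x ∈ B', ∀ y ∈ B', t (x * y) = t x * t y := by
    intro x hx y hy; rw [ht, rho_mul hv' hx hy, tau_mul hon']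
  have htstar : ∀ x ∈ B', t (star x) = star (t x) := by
    intro x hx; rw [ht, rho_star hv' hx, tau_star]
  have htmem : ∀ x, t x ∈ S' := fun x => tau_mem hon' _
  obtain ⟨P, hP⟩ : ∃ P, P = t 1 := ⟨_, rfl⟩
  have hPs : star P = P := by rw [hP, ← htstar 1 hone', star_one]
  have hPP : P * P = P := by rw [hP, ← htmul 1 hone' 1 hone', one_mul]
  have hPmem : P ∈ S' := by rw [hP]; exact htmem _
  have hPt : ∀ x ∈ B', P * t x = t x := by
    intro x hx; rw [hP, ← htmul 1 hone' x hx, one_mul]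
  have htP : ∀ x ∈ B', t x * P = t x := by
    intro x hx; rw [hP, ← htmul x hx 1 hone', mul_one]
  have hPu : ∀ a, vv st.v g a ≠ 0 → P * u' a = u' a := by
    intro a ha
    rw [hP, ht, tau_mul_u hon']
    rw [Finset.sum_eq_single_of_mem a (Finset.mem_univ a)]
    · rw [rho_one_apply hv' a a ha, if_pos rfl, one_smul]
    · intro b _ hb
      rw [rho_one_apply hv' b a ha, if_neg hb, zero_smul]
  have htu0 : ∀ x ∈ B', ∀ a, vv st.v g a = 0 → t x * u' a = 0 := by
    intro x hx a ha
    rw [ht, tau_mul_u hon']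
    refine Finset.sum_eq_zero fun b _ => ?_
    have : rho (vv st.v g) x b a = 0 := by
      by_contra hn; exact rho_ne_right hv' hx hn ha
    rw [this, zero_smul]
  have hphiu : ∀ x ∈ B, ∀ a, vv st.v g a ≠ 0 → st.φ x * u' a = t x * u' a := by
    rintro x hx ⟨s, c⟩ ha
    have hs : st.v s ≠ 0 := by
      intro h0; apply ha; simp [vv, h0]
    have hg : g s c ≠ 0 := fun h0 => ha ((vv_ne r).2 h0)
    rw [ht, tau_mul_u hon', Fintype.sum_prod_type]
    simp only [u']
    rw [← mul_assoc, st.act x hx s hs, Finset.sum_mul]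
    refine Finset.sum_congr rfl fun s' _ => ?_
    rw [Finset.sum_eq_single_of_mem c (Finset.mem_univ c)]
    · rw [rho_vv hv r hx s s' c c hg, if_pos rfl, smul_mul_assoc]
      by_cases h0 : rho st.v x s' s = 0
      · simp [h0]
      · rw [(r.tau s' s).2 (rho_ne hv hx h0)]
    · intro c' _ hc
      rw [rho_vv hv r hx s s' c c' hg, if_neg hc, zero_smul]
  have hphiP : ∀ x ∈ B, st.φ x * P = t x := by
    intro x hx
    have e1 : P = ∑ a, (P * u' a) * star (u' a) := by
      rw [hP]; exact tau_eq_sum hon' _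
    have e2 : t x = ∑ a, (t x * u' a) * star (u' a) := tau_eq_sum hon' _
    rw [e1, e2, Finset.mul_sum]
    refine Finset.sum_congr rfl fun a _ => ?_
    by_cases ha : vv st.v g a = 0
    · rw [htu0 x (hB hx) a ha, hP, htu0 1 hone' a ha]; simp
    · rw [hPu a ha, ← mul_assoc, hphiu x hx a ha]
  have hPphi : ∀ x ∈ B, P * st.φ x = t x := by
    intro x hx
    have := congrArg star (hphiP (star x) (star_mem hx))
    rw [star_mul, hPs, st.star_map x hx, star_star, htstar x (hB hx), star_star] at this
    exact this
  let D : Y → Y := fun z => z - P * z - z * P + P * z * P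
  have hD : ∀ z, D z = z - P * z - z * P + P * z * P := fun z => rfl
  have hPD : ∀ z, P * D z = 0 := by
    intro z
    rw [hD, mul_add, mul_sub, mul_sub]
    simp only [← mul_assoc, hPP]; abel
  have hDP : ∀ z, D z * P = 0 := by
    intro z
    rw [hD, add_mul, sub_mul, sub_mul]
    simp only [mul_assoc, hPP]; abel
  have hDadd : ∀ z w, D (z + w) = D z + D w := by
    intro z w; simp only [hD, mul_add, add_mul]; abel
  have hDsmul : ∀ (c : ℂ) z, D (c • z) = c • D z := by
    intro c z
    simp only [hD, smul_add, smul_sub, mul_smul_comm, smul_mul_assoc]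
  have hDstar : ∀ z, D (star z) = star (D z) := by
    intro z
    simp only [hD, star_add, star_sub, star_mul, hPs, mul_assoc]; abel
  let φ' : X → Y := fun x => t x + D (st.φ (E x))
  have hφ' : ∀ x, φ' x = t x + D (st.φ (E x)) := fun x => rfl
  refine ⟨Stage.mk (J := st.J × Fin N) (vv st.v g) Q' u' φ' hv' hon' ?_ ?_ ?_ ?_ ?_ ?_, ?_, ?_⟩
  · intro x hx
    have hz := hS (st.mem (E x) (hEm x))
    exact add_mem (htmem x) (add_mem (sub_mem (sub_mem hz (mul_mem hPmem hz)) (mul_mem hz hPmem))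
      (mul_mem (mul_mem hPmem hz) hPmem))
  · intro x hx y hy
    rw [hφ', hφ', hφ', htadd x hx y hy, hEadd x hx y hy, st.add _ (hEm x) _ (hEm y), hDadd]; abel
  · intro c x hx
    rw [hφ', hφ', htsmul c x hx, hEsmul c x hx, st.smul c _ (hEm x), hDsmul]; exact (smul_add _ _ _).symm
  · intro x hx
    rw [hφ', hφ', htstar x hx, hEstar x hx, st.star_map _ (hEm x), hDstar]; exact (star_add _ _).symm
  · intro x hx
    refine norm_add_orth _ _ _ ?_ ?_ ?_ ?_
    · exact le_of_eq ((tau_norm hon' _).trans (rho_norm hv' hx))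
    · calc _ ≤ _ := norm_compress_compl P _ hPs hPP
        _ ≤ _ := st.norm_le _ (hEm x)
        _ ≤ _ := hEnorm x hx
    · rw [← htstar x hx, ← htP (star x) (star_mem hx),
        mul_assoc, hPD, mul_zero]
    · rw [← htP x hx, ← hDstar, mul_assoc, hPD, mul_zero]
  · intro x hx a ha
    have : D (st.φ (E x)) * u' a = 0 := by
      rw [← hPu a ha, ← mul_assoc, hDP, zero_mul]
    rw [hφ', add_mul, this, add_zero, ht, tau_mul_u hon']
  · intro x hx
    change t x + D (st.φ (E x)) = st.φ x
    rw [hEid x hx, hD, hPphi x hx, hphiP x hx, htP x (hB hx)]; abel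
  · intro y hy
    exact psi_refine hv st.on hS r hQ' hh h1 h2 h3 hy
end Step
end AFB

namespace AFB
open scoped Matrix.Norms.L2Operator

lemma extend_seq {X Y : Type*} [NormedAddCommGroup X] [NormedSpace ℂ X] [NormedAddCommGroup Y]
    [NormedSpace ℂ Y] [CompleteSpace Y] (V : ℕ → Submodule ℂ X) (hV : Monotone V)
    (hd : Dense (⋃ k, (V k : Set X))) (f : ℕ → X → Y) (C : ℝ)
    (hadd : ∀ k, ∀ x ∈ V k, ∀ y ∈ V k, f k (x + y) = f k x + f k y)
    (hsmul : ∀ k, ∀ c : ℂ, ∀ x ∈ V k, f k (c • x) = c • f k x)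
    (hn : ∀ k, ∀ x ∈ V k, ‖f k x‖ ≤ C * ‖x‖)
    (hc : ∀ k, ∀ x ∈ V k, f (k + 1) x = f k x) :
    ∃ F : X →L[ℂ] Y, ∀ k, ∀ x ∈ V k, F x = f k x := by
  have hc1 : ∀ k l, k ≤ l → ∀ x ∈ V k, f l x = f k x := by
    intro k l hkl
    induction l, hkl using Nat.le_induction with
    | base => intro x _; rfl
    | succ l hl ih => intro x hx; rw [hc l x (hV hl hx), ih x hx]
  have hc2 : ∀ k l x, x ∈ V k → x ∈ V l → f k x = f l x := by
    intro k l x hk hl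
    rcases le_total k l with h | h
    · exact (hc1 k l h x hk).symm
    · exact hc1 l k h x hl
  have hmem : ∀ x, x ∈ (⨆ k, V k : Submodule ℂ X) ↔ ∃ k, x ∈ V k := fun x =>
    Submodule.mem_iSup_of_directed _ hV.directed_le
  choose κ hκ using fun x : (⨆ k, V k : Submodule ℂ X) => (hmem x).1 x.2
  let g : (⨆ k, V k : Submodule ℂ X) →ₗ[ℂ] Y :=
    { toFun := fun x => f (κ x) x
      map_add' := by
        intro x y
        set m := max (κ x) (κ y)
        have hx : (x : X) ∈ V m := hV (le_max_left _ _) (hκ x)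
        have hy : (y : X) ∈ V m := hV (le_max_right _ _) (hκ y)
        have hxy : ((x + y : (⨆ k, V k : Submodule ℂ X)) : X) ∈ V m := add_mem hx hy
        rw [hc2 _ m _ (hκ (x + y)) hxy, hc2 _ m _ (hκ x) hx, hc2 _ m _ (hκ y) hy]
        exact hadd m _ hx _ hy
      map_smul' := by
        intro c x
        have hx : ((c • x : (⨆ k, V k : Submodule ℂ X)) : X) ∈ V (κ x) :=
          Submodule.smul_mem _ c (hκ x)
        rw [hc2 _ _ _ (hκ (c • x)) hx]
        exact hsmul _ c _ (hκ x) }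
  have hdr : DenseRange (⨆ k, V k : Submodule ℂ X).subtype := by
    have : Set.range (⨆ k, V k : Submodule ℂ X).subtype = ⋃ k, (V k : Set X) := by
      ext x
      simp only [Submodule.coe_subtype, Subtype.range_coe_subtype, Set.mem_setOf_eq, Set.mem_iUnion]
      exact hmem x
    rw [DenseRange, this]; exact hd
  refine ⟨g.extendOfNorm (⨆ k, V k : Submodule ℂ X).subtype, fun k x hx => ?_⟩
  have hx' : x ∈ (⨆ k, V k : Submodule ℂ X) := (hmem x).2 ⟨k, hx⟩
  have := LinearMap.extendOfNorm_eq (f := g) hdr ⟨C, fun z => hn _ _ (hκ z)⟩ ⟨x, hx'⟩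
  change g.extendOfNorm (⨆ k, V k : Submodule ℂ X).subtype x = _ at this
  rw [this]
  exact hc2 _ _ _ (hκ ⟨x, hx'⟩) hx

/-- Enough room in the corners of the AF algebra. -/
def PropH {Y : Type*} [NonUnitalCStarAlgebra Y] (SY : ℕ → NonUnitalStarSubalgebra ℂ Y) : Prop :=
  ∀ m Q, IsMinProj (SY m) Q → ∀ N n, ∃ m', N ≤ m' ∧ m ≤ m' ∧ ∃ Q', IsMinProj (SY m') Q' ∧
    ∃ h : Fin n → Y, (∀ i, h i ∈ SY m') ∧ (∀ i, Q * h i = h i) ∧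
      ∀ i j, star (h i) * h j = if i = j then Q' else 0

section T
variable {X Y : Type*} [CStarAlgebra X] [NonUnitalCStarAlgebra Y]

/-- The scalar subalgebra. -/
def scalarSub (X : Type*) [CStarAlgebra X] : NonUnitalStarSubalgebra ℂ X where
  carrier := {x | ∃ c : ℂ, x = c • (1 : X)}
  add_mem' := by
    rintro _ _ ⟨c, rfl⟩ ⟨d, rfl⟩; exact ⟨c + d, (add_smul _ _ _).symm⟩
  zero_mem' := ⟨0, by simp⟩
  mul_mem' := by
    rintro _ _ ⟨c, rfl⟩ ⟨d, rfl⟩; exact ⟨c * d, by simp [smul_smul, mul_comm]⟩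
  smul_mem' := by
    rintro a _ ⟨c, rfl⟩; exact ⟨a * c, by simp [smul_smul]⟩
  star_mem' := by
    rintro _ ⟨c, rfl⟩; exact ⟨star c, by simp⟩

lemma scalarSub_fd : FiniteDimensional ℂ (scalarSub X) := by
  have : FiniteDimensional ℂ (Submodule.span ℂ {(1 : X)}) := inferInstance
  refine Submodule.finiteDimensional_of_le (S₁ := (scalarSub X).toNonUnitalSubalgebra.toSubmodule)
    (S₂ := Submodule.span ℂ {(1 : X)}) ?_
  rintro x ⟨c, rfl⟩
  exact Submodule.smul_mem _ _ (Submodule.mem_span_singleton_self _)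

lemma exists_stage0 {S : NonUnitalStarSubalgebra ℂ Y} {Q : Y} (hQ : IsMinProj S Q) :
    Nonempty (Stage (scalarSub X) S) := by
  have key : ∀ c : ℂ, (1 : X) ≠ 0 → coef (1 : X) (c • 1) = c := fun c h => coef_smul h c
  have hz : ∀ x : X, (1 : X) = 0 → coef (1 : X) x = 0 := by
    intro x h; rw [h, coef_zero_left]
  have hQn : ‖Q‖ ≤ 1 := IsStarProjection.norm_le Q ⟨hQ.idem, hQ.sa⟩
  refine ⟨Stage.mk (J := Unit) (fun _ => (1 : X)) Q (fun _ => Q) (fun x => coef (1 : X) x • Q)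
    ?_ ?_ ?_ ?_ ?_ ?_ ?_ ?_⟩
  · refine ⟨fun _ => ⟨1, by simp⟩, fun s s' h => absurd rfl h, by simp, ?_, ?_⟩
    · intro x _ s s' h; exact absurd rfl h
    · rintro x ⟨c, rfl⟩ s s'; exact ⟨c, by simp⟩
  · refine ⟨hQ, fun _ => hQ.mem, ?_⟩
    intro s s'; simp [hQ.sa, hQ.idem]
  · intro x _; exact SMulMemClass.smul_mem _ hQ.mem
  · rintro _ ⟨c, rfl⟩ _ ⟨d, rfl⟩
    by_cases h : (1 : X) = 0
    · simp only [hz _ h]; simp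
    · rw [← add_smul]; simp only [key _ h]; exact add_smul _ _ _
  · rintro a _ ⟨c, rfl⟩
    by_cases h : (1 : X) = 0
    · simp only [hz _ h]; simp
    · rw [smul_smul]; simp only [key _ h]; exact mul_smul _ _ _
  · rintro _ ⟨c, rfl⟩
    by_cases h : (1 : X) = 0
    · simp only [hz _ h]; simp
    · rw [star_smul, star_one]; simp only [key _ h, star_smul, hQ.sa]
  · rintro _ ⟨c, rfl⟩
    by_cases h : (1 : X) = 0
    · simp only [hz _ h]; simp
    · rw [key _ h]
      have : Nontrivial X := ⟨1, 0, h⟩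
      rw [norm_smul, norm_smul, CStarRing.norm_one]
      gcongr
  · rintro _ ⟨c, rfl⟩ s _
    simp [rho, hQ.idem, smul_mul_assoc]

lemma stage_next {SY : ℕ → NonUnitalStarSubalgebra ℂ Y} (hSY : Monotone SY) (hH : PropH SY)
    {B B' : NonUnitalStarSubalgebra ℂ X} [FiniteDimensional ℂ B] [FiniteDimensional ℂ B']
    (hB : B ≤ B') {m : ℕ} (st : Stage B (SY m)) (k : ℕ) :
    ∃ m', k ≤ m' ∧ m ≤ m' ∧ ∃ st' : Stage B' (SY m'),
      (∀ x ∈ B, st'.φ x = st.φ x) ∧ ∀ y ∈ SY m, st'.psi y = st.psi y := by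
  obtain ⟨N, hN, g, τ, r⟩ := exists_refi st.path hB
  obtain ⟨m', hk, hm, Q', hQ', h, h1, h2, h3⟩ :=
    hH m st.Q st.on.Qmin k (Fintype.card (st.J × Fin N))
  refine ⟨m', hk, hm, ?_⟩
  let e := Fintype.equivFin (st.J × Fin N)
  refine stage_step st hB (hSY hm) hN r hQ' (fun i => h (e i)) (fun i => h1 _) (fun i => h2 _) ?_
  intro i j
  rw [h3]; simp [e.injective.eq_iff]

/-- Complemented embeddings. -/
def Compl (X Y : Type*) [NormedAddCommGroup X] [NormedSpace ℂ X] [NormedAddCommGroup Y]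
    [NormedSpace ℂ Y] : Prop := ∃ (i : X →L[ℂ] Y) (r : Y →L[ℂ] X), ∀ x, r (i x) = x

theorem compl_unital (B : ℕ → NonUnitalStarSubalgebra ℂ X) (hB : Monotone B)
    (hBf : ∀ k, FiniteDimensional ℂ (B k)) (hBd : Dense (⋃ k, (B k : Set X))) (h1 : (1 : X) ∈ B 0)
    (SY : ℕ → NonUnitalStarSubalgebra ℂ Y) (hSY : Monotone SY)
    (hYd : Dense (⋃ k, (SY k : Set Y))) (hH : PropH SY) {m0 : ℕ} {Q0 : Y}
    (hQ0 : IsMinProj (SY m0) Q0) : Compl X Y := by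
  have hfd0 : FiniteDimensional ℂ (scalarSub X) := scalarSub_fd
  obtain ⟨st0⟩ := exists_stage0 (X := X) hQ0
  have hle : scalarSub X ≤ B 0 := by
    rintro x ⟨c, rfl⟩; exact SMulMemClass.smul_mem _ h1
  obtain ⟨m1, -, -, st1, -, -⟩ := stage_next hSY hH hle st0 0
  have hnext : ∀ k (t : Σ m, Stage (B k) (SY m)), ∃ t' : Σ m, Stage (B (k + 1)) (SY m),
      k ≤ t'.1 ∧ t.1 ≤ t'.1 ∧ (∀ x ∈ B k, t'.2.φ x = t.2.φ x) ∧
        ∀ y ∈ SY t.1, t'.2.psi y = t.2.psi y := by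
    rintro k ⟨m, st⟩
    obtain ⟨m', h1, h2, st', h3, h4⟩ := stage_next hSY hH (hB (Nat.le_succ k)) st k
    exact ⟨⟨m', st'⟩, h1, h2, h3, h4⟩
  choose nx hx1 hx2 hx3 hx4 using hnext
  let sq : ∀ k, Σ m, Stage (B k) (SY m) := fun k => Nat.rec ⟨m1, st1⟩ (fun k t => nx k t) k
  have hsq : ∀ k, sq (k + 1) = nx k (sq k) := fun k => rfl
  have hm : Monotone fun k => (sq k).1 := monotone_nat_of_le_succ fun k => by
    rw [hsq]; exact hx2 _ _
  obtain ⟨i, hi⟩ := extend_seq (fun k => (B k).toNonUnitalSubalgebra.toSubmodule)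
    (fun a b h => hB h) hBd (fun k => (sq k).2.φ) 1
    (fun k => (sq k).2.add) (fun k => (sq k).2.smul)
    (fun k x hx => by rw [one_mul]; exact (sq k).2.norm_le x hx)
    (fun k x hx => by rw [hsq]; exact hx3 _ _ x hx)
  obtain ⟨r, hr⟩ := extend_seq (fun k => (SY (sq k).1).toNonUnitalSubalgebra.toSubmodule)
    (fun a b h => hSY (hm h)) (by
      refine hYd.mono ?_
      refine Set.iUnion_subset fun k => ?_
      refine subset_trans ?_ (Set.subset_iUnion _ (k + 1))
      intro y hy
      have : k ≤ (sq (k + 1)).1 := by rw [hsq]; exact hx1 _ _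
      exact hSY this hy) (fun k => (sq k).2.psi) 1
    (fun k y hy z hz => (sq k).2.psi_add hy hz) (fun k c y hy => (sq k).2.psi_smul c hy)
    (fun k y hy => by rw [one_mul]; exact (sq k).2.psi_norm hy)
    (fun k y hy => by rw [hsq]; exact hx4 _ _ y hy)
  refine ⟨i, r, ?_⟩
  have : (fun x => r (i x)) = id := by
    refine Continuous.ext_on hBd (by fun_prop) continuous_id ?_
    intro x hx
    obtain ⟨k, hk⟩ := Set.mem_iUnion.1 hx
    dsimp only [id]
    rw [hi k x hk, hr k _ ((sq k).2.mem x hk), (sq k).2.psi_phi hk]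
  exact fun x => congrFun this x
end T
end AFB

namespace AFB

lemma Compl.trans {X Y Z : Type*} [NormedAddCommGroup X] [NormedSpace ℂ X] [NormedAddCommGroup Y]
    [NormedSpace ℂ Y] [NormedAddCommGroup Z] [NormedSpace ℂ Z] (h1 : Compl X Y) (h2 : Compl Y Z) :
    Compl X Z := by
  obtain ⟨i, r, h⟩ := h1
  obtain ⟨i', r', h'⟩ := h2
  exact ⟨i'.comp i, r.comp r', fun x => by simp [h, h']⟩

section Nonunital
variable {X Y : Type*} [NonUnitalCStarAlgebra X] [NonUnitalCStarAlgebra Y]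

/-- Unitization of a subalgebra. -/
def unitSub (B : NonUnitalStarSubalgebra ℂ X) : NonUnitalStarSubalgebra ℂ (Unitization ℂ X) where
  carrier := {x | x.snd ∈ B}
  add_mem' := by
    intro a b ha hb
    simp only [Set.mem_ofPred_eq, Unitization.snd_add] at *
    exact add_mem ha hb
  zero_mem' := by
    simp only [Set.mem_ofPred_eq, Unitization.snd_zero]
    exact zero_mem B
  mul_mem' := by
    intro a b ha hb
    simp only [Set.mem_ofPred_eq, Unitization.snd_mul] at *
    exact add_mem (add_mem (SMulMemClass.smul_mem _ hb) (SMulMemClass.smul_mem _ ha)) (mul_mem ha hb)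
  smul_mem' := by
    intro c a ha
    simp only [Set.mem_ofPred_eq, Unitization.snd_smul] at *
    exact SMulMemClass.smul_mem c (s := B) ha
  star_mem' := by
    intro a ha
    simp only [Set.mem_ofPred_eq, Unitization.snd_star] at *
    exact star_mem ha

lemma mem_unitSub {B : NonUnitalStarSubalgebra ℂ X} {x : Unitization ℂ X} :
    x ∈ unitSub B ↔ x.snd ∈ B := Iff.of_eq (Set.mem_ofPred_eq)

lemma unitSub_fd (B : NonUnitalStarSubalgebra ℂ X) [FiniteDimensional ℂ B] :
    FiniteDimensional ℂ (unitSub B) := by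
  let f : (unitSub B) →ₗ[ℂ] ℂ × B :=
    { toFun := fun x => (x.1.fst, ⟨x.1.snd, mem_unitSub.1 x.2⟩)
      map_add' := fun x y => rfl
      map_smul' := fun c x => rfl }
  refine FiniteDimensional.of_injective f ?_
  intro x y e
  have h1 : x.1.fst = y.1.fst := congrArg (fun z : ℂ × B => z.1) e
  have h2 : x.1.snd = y.1.snd := congrArg (fun z : ℂ × B => (z.2 : X)) e
  exact Subtype.ext (Unitization.ext h1 h2)

lemma compl_unitization : Compl X (Unitization ℂ X) := by
  refine ⟨⟨Unitization.inrHom ℂ ℂ X, Unitization.continuous_inr⟩,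
    ⟨Unitization.sndHom ℂ ℂ X, Unitization.continuous_snd⟩, fun x => rfl⟩

theorem compl_nonunital (B : ℕ → NonUnitalStarSubalgebra ℂ X) (hB : Monotone B)
    (hBf : ∀ k, FiniteDimensional ℂ (B k)) (hBd : Dense (⋃ k, (B k : Set X)))
    (SY : ℕ → NonUnitalStarSubalgebra ℂ Y) (hSY : Monotone SY)
    (hYd : Dense (⋃ k, (SY k : Set Y))) (hH : PropH SY) {m0 : ℕ} {Q0 : Y}
    (hQ0 : IsMinProj (SY m0) Q0) : Compl X Y := by
  refine compl_unitization.trans ?_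
  refine compl_unital (fun k => unitSub (B k)) ?_ (fun k => unitSub_fd (B k)) ?_ ?_ SY hSY hYd hH hQ0
  · intro a b h x hx
    exact mem_unitSub.2 (hB h (mem_unitSub.1 hx))
  · intro x
    have hx : x = Unitization.inl x.fst + (x.snd : Unitization ℂ X) :=
      (Unitization.inl_fst_add_inr_snd_eq x).symm
    rw [hx]
    have hc : Continuous fun y : X => (Unitization.inl x.fst + (y : Unitization ℂ X)) :=
      continuous_const.add Unitization.continuous_inr
    refine map_mem_closure (f := fun y : X => (Unitization.inl x.fst + (y : Unitization ℂ X))) hc (hBd x.snd) ?_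
    intro y hy
    obtain ⟨k, hk⟩ := Set.mem_iUnion.1 hy
    refine Set.mem_iUnion.2 ⟨k, ?_⟩
    refine mem_unitSub.2 ?_
    simpa using hk
  · refine mem_unitSub.2 ?_
    simp
end Nonunital

section PH
variable {Y : Type*} [NonUnitalCStarAlgebra Y] {SY : ℕ → NonUnitalStarSubalgebra ℂ Y}

lemma exists_two (hSY : Monotone SY) (hf : ∀ k, FiniteDimensional ℂ (SY k))
    (hYd : Dense (⋃ k, (SY k : Set Y)))
    (hprime : ∀ m, ∀ r1 r2 : Y, r1 ∈ SY m → r2 ∈ SY m → star r1 = r1 → r1 * r1 = r1 → r1 ≠ 0 → star r2 = r2 → r2 * r2 = r2 →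
      r2 ≠ 0 → ∃ x, r1 * x * r2 ≠ 0)
    (hnomin : ∀ m Q, IsMinProj (SY m) Q → ∃ a, ∀ c : ℂ, Q * a * Q ≠ c • Q)
    {m : ℕ} {Q : Y} (hQ : IsMinProj (SY m) Q) (N : ℕ) :
    ∃ m', N ≤ m' ∧ m ≤ m' ∧ ∃ Q', IsMinProj (SY m') Q' ∧ ∃ w1 w2, w1 ∈ SY m' ∧ w2 ∈ SY m' ∧
      Q * w1 = w1 ∧ Q * w2 = w2 ∧ star w1 * w1 = Q' ∧ star w2 * w2 = Q' ∧ star w1 * w2 = 0 ∧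
      star w2 * w1 = 0 := by
  have dens : ∀ U : Set Y, IsOpen U → U.Nonempty → ∃ k, ∃ x ∈ SY k, x ∈ U := by
    intro U hU hne
    obtain ⟨x, hx, hx'⟩ := hYd.inter_open_nonempty U hU hne
    obtain ⟨k, hk⟩ := Set.mem_iUnion.1 hx'
    exact ⟨k, x, hk, hx⟩
  obtain ⟨a0, ha0⟩ := hnomin m Q hQ
  obtain ⟨k, a, hak, ha⟩ := dens {a | Q * a * Q ∉ Submodule.span ℂ {Q}} (by
      have hc : IsClosed ((Submodule.span ℂ {Q} : Submodule ℂ Y) : Set Y) :=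
        Submodule.closed_of_finiteDimensional _
      exact (hc.isOpen_compl).preimage (f := fun a => Q * a * Q) (by fun_prop))
    ⟨a0, by
      simp only [Set.mem_ofPred_eq, Submodule.mem_span_singleton, not_exists]
      exact fun c hc => ha0 c hc.symm⟩
  set m1 := max m k with hm1
  have hQ1 : Q ∈ SY m1 := hSY (le_max_left _ _) hQ.mem
  have hnm : ¬ IsMinProj (SY m1) Q := by
    intro hmin
    obtain ⟨c, hc⟩ := hmin.min a (hSY (le_max_right _ _) hak)
    exact ha (by rw [hc]; exact Submodule.smul_mem _ _ (Submodule.mem_span_singleton_self _))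
  obtain ⟨p, hpm, hps, hpp, hp0, hpQ, hQp, hpne⟩ :=
    exists_smaller_proj (SY m1) hQ1 hQ.sa hQ.idem hQ.ne hnm
  set r := Q - p with hr
  have hrs : star r = r := by rw [hr, star_sub, hQ.sa, hps]
  have hrr : r * r = r := by
    rw [hr, sub_mul, mul_sub, mul_sub, hQ.idem, hpQ, hQp, hpp]; abel
  have hr0 : r ≠ 0 := fun h => hpne (sub_eq_zero.1 h).symm
  have hQr : Q * r = r := by rw [hr, mul_sub, hQ.idem, hQp]
  have hpr : p * r = 0 := by rw [hr, mul_sub, hpQ, hpp, sub_self]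
  obtain ⟨x0, hx0⟩ := hprime m1 p r hpm (sub_mem hQ1 hpm) hps hpp hp0 hrs hrr hr0
  obtain ⟨k2, x, hxk, hx⟩ := dens {x | p * x * r ≠ 0} (by
    exact isOpen_ne.preimage (f := fun x => p * x * r) (by fun_prop)) ⟨x0, hx0⟩
  set m2 := max (max m1 k2) N with hm2
  have h12 : m1 ≤ m2 := (le_max_left _ _).trans (le_max_left _ _)
  have hxm : x ∈ SY m2 := hSY ((le_max_right _ _).trans (le_max_left _ _)) hxk
  obtain ⟨s, hs1, hs2, hs3⟩ := min_decomp (SY m2) (hSY h12 (sub_mem hQ1 hpm)) hrs hrr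
  obtain ⟨s', hs1', hs2', hs3'⟩ := min_decomp (SY m2) (hSY h12 hpm) hps hpp
  have hex : ∃ e' ∈ s', ∃ e ∈ s, e' * x * e ≠ 0 := by
    by_contra! hcon
    apply hx
    rw [show p * x * r = (∑ e' ∈ s', e') * x * ∑ e ∈ s, e by rw [hs3, hs3'], Finset.sum_mul,
      Finset.sum_mul]
    refine Finset.sum_eq_zero fun e' he' => ?_
    rw [Finset.mul_sum]
    exact Finset.sum_eq_zero fun e he => hcon e' he' e he
  obtain ⟨e', he', e, he, hne⟩ := hex
  obtain ⟨w, hw, hw1, hw2⟩ := min_equiv (hs1' e' he') (hs1 e he) hxm hne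
  have hE := hs1 e he
  have hE' := hs1' e' he'
  have e1 := (decomp_mul hs1 hs2 hs3 he)
  have e2 := (decomp_mul hs1' hs2' hs3' he')
  have hee : e' * e = 0 := by
    calc e' * e = (e' * p) * (r * e) := by rw [e2.1, e1.2]
      _ = e' * (p * r) * e := by simp only [mul_assoc]
      _ = 0 := by rw [hpr]; simp
  have hww : star w * e' = star w := by
    have : star w * e' = star w * (w * star w) := by rw [hw2]
    rw [this, ← mul_assoc, hw1]
    have := congrArg star (pisom hE.idem hE.sa hw1)
    rwa [star_mul, hE.sa] at this
  have hww' : e' * w = w := by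
    have := congrArg star hww
    rwa [star_mul, star_star, hE'.sa] at this
  refine ⟨m2, le_max_right _ _, (le_max_left m k).trans h12, e, hE, w, e, hw, hE.mem, ?_, ?_, hw1,
    ?_, ?_, ?_⟩
  · calc Q * w = Q * (p * (e' * w)) := by rw [hww', ← hww', ← mul_assoc p, e2.2]
      _ = w := by rw [← mul_assoc, hQp, hww', ← hww', ← mul_assoc, e2.2]
  · rw [← e1.2, ← mul_assoc, hQr]
  · rw [hE.sa, hE.idem]
  · rw [← hww, mul_assoc, hee, mul_zero]
  · rw [hE.sa, ← hww', ← mul_assoc]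
    have := congrArg star hee
    rw [star_mul, hE.sa, hE'.sa, star_zero] at this
    rw [this, zero_mul]

theorem propH_of (hSY : Monotone SY) (hf : ∀ k, FiniteDimensional ℂ (SY k))
    (hYd : Dense (⋃ k, (SY k : Set Y)))
    (hprime : ∀ m, ∀ r1 r2 : Y, r1 ∈ SY m → r2 ∈ SY m → star r1 = r1 → r1 * r1 = r1 → r1 ≠ 0 → star r2 = r2 → r2 * r2 = r2 →
      r2 ≠ 0 → ∃ x, r1 * x * r2 ≠ 0)
    (hnomin : ∀ m Q, IsMinProj (SY m) Q → ∃ a, ∀ c : ℂ, Q * a * Q ≠ c • Q) : PropH SY := by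
  intro m Q hQ N n
  suffices hs : ∀ n, ∃ m', N ≤ m' ∧ m ≤ m' ∧ ∃ Q', IsMinProj (SY m') Q' ∧
    ∃ h : Fin (n + 1) → Y, (∀ i, h i ∈ SY m') ∧ (∀ i, Q * h i = h i) ∧
      ∀ i j, star (h i) * h j = if i = j then Q' else 0 by
    obtain ⟨m', h1, h2, Q', h3, h, h4, h5, h6⟩ := hs n
    exact ⟨m', h1, h2, Q', h3, fun i => h i.castSucc, fun i => h4 _, fun i => h5 _,
      fun i j => by rw [h6]; simp⟩
  intro n
  induction n with
  | zero =>
    obtain ⟨m', h1, h2, Q', h3, w1, w2, a1, a2, a3, a4, a5, a6, a7, a8⟩ :=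
      exists_two hSY hf hYd hprime hnomin hQ N
    refine ⟨m', h1, h2, Q', h3, fun _ => w1, fun _ => a1, fun _ => a3, fun i j => ?_⟩
    rw [if_pos (show i = j by lia)]; exact a5
  | succ n ih =>
    obtain ⟨m', h1, h2, Q', h3, h, h4, h5, h6⟩ := ih
    obtain ⟨m'', g1, g2, Q'', g3, w1, w2, a1, a2, a3, a4, a5, a6, a7, a8⟩ :=
      exists_two hSY hf hYd hprime hnomin h3 N
    have calc1 : ∀ i j (x y : Y), star (h i * x) * (h j * y) =
        if i = j then star x * (Q' * y) else 0 := by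
      intro i j x y
      have : star (h i * x) * (h j * y) = star x * (star (h i) * h j * y) := by
        simp only [star_mul, mul_assoc]
      rw [this, h6]
      split_ifs <;> simp
    refine ⟨m'', g1, h2.trans g2, Q'', g3, Fin.cons (h 0 * w2) (fun i => h i * w1), ?_, ?_, ?_⟩
    · intro i
      refine Fin.cases ?_ (fun i => ?_) i
      · exact mul_mem (hSY g2 (h4 _)) a2
      · exact mul_mem (hSY g2 (h4 _)) a1
    · intro i
      refine Fin.cases ?_ (fun i => ?_) i
      · simp only [Fin.cons_zero]; rw [← mul_assoc, h5]
      · simp only [Fin.cons_succ]; rw [← mul_assoc, h5]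
    · intro i j
      refine Fin.cases ?_ (fun i => ?_) i
      · refine Fin.cases ?_ (fun j => ?_) j
        · simp only [Fin.cons_zero]; rw [calc1, if_pos rfl, a4, a6]; simp
        · simp only [Fin.cons_zero, Fin.cons_succ]
          rw [calc1, a3, a8, if_neg (Fin.succ_ne_zero j).symm, ite_self]
      · refine Fin.cases ?_ (fun j => ?_) j
        · simp only [Fin.cons_zero, Fin.cons_succ]
          rw [calc1, a4, a7, if_neg (Fin.succ_ne_zero i), ite_self]
        · simp only [Fin.cons_succ]
          rw [calc1, a3, a5]; simp
end PH
end AFB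

namespace AFB
open ZeroAtInfty Filter Topology

section C0
variable {Y : Type*} [NonUnitalCStarAlgebra Y]

/-- Finitely supported sequences in `B`. -/
def c0Sub (B : NonUnitalStarSubalgebra ℂ Y) (k : ℕ) : NonUnitalStarSubalgebra ℂ C₀(ℕ, Y) where
  carrier := {f | (∀ n, f n ∈ B) ∧ ∀ n, k ≤ n → f n = 0}
  add_mem' := by
    intro a b ha hb
    simp only [Set.mem_ofPred_eq] at *
    exact ⟨fun n => add_mem (ha.1 n) (hb.1 n), fun n hn => by simp [ha.2 n hn, hb.2 n hn]⟩
  zero_mem' := by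
    simp only [Set.mem_ofPred_eq]
    exact ⟨fun n => zero_mem B, fun n hn => rfl⟩
  mul_mem' := by
    intro a b ha hb
    simp only [Set.mem_ofPred_eq] at *
    exact ⟨fun n => mul_mem (ha.1 n) (hb.1 n), fun n hn => by simp [ha.2 n hn, hb.2 n hn]⟩
  smul_mem' := by
    intro c a ha
    simp only [Set.mem_ofPred_eq] at *
    exact ⟨fun n => SMulMemClass.smul_mem c (ha.1 n), fun n hn => by simp [ha.2 n hn]⟩
  star_mem' := by
    intro a ha
    simp only [Set.mem_ofPred_eq] at *
    exact ⟨fun n => star_mem (ha.1 n), fun n hn => by simp [ha.2 n hn]⟩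

lemma mem_c0Sub {B : NonUnitalStarSubalgebra ℂ Y} {k : ℕ} {f : C₀(ℕ, Y)} :
    f ∈ c0Sub B k ↔ (∀ n, f n ∈ B) ∧ ∀ n, k ≤ n → f n = 0 := Iff.of_eq (Set.mem_ofPred_eq)

lemma c0Sub_fd (B : NonUnitalStarSubalgebra ℂ Y) [FiniteDimensional ℂ B] (k : ℕ) :
    FiniteDimensional ℂ (c0Sub B k) := by
  let f : (c0Sub B k) →ₗ[ℂ] (Fin k → B) :=
    { toFun := fun x i => ⟨x.1 i, (mem_c0Sub.1 x.2).1 i⟩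
      map_add' := fun x y => rfl
      map_smul' := fun c x => rfl }
  refine FiniteDimensional.of_injective f ?_
  intro x y e
  refine Subtype.ext (ZeroAtInftyContinuousMap.ext fun n => ?_)
  by_cases hn : n < k
  · exact congrArg (fun z : Fin k → B => (z ⟨n, hn⟩ : Y)) e
  · rw [(mem_c0Sub.1 x.2).2 n (not_lt.1 hn), (mem_c0Sub.1 y.2).2 n (not_lt.1 hn)]

/-- A sequence with finite support. -/
def finSeq {Z : Type*} [NormedAddCommGroup Z] (g : ℕ → Z) (k : ℕ) : C₀(ℕ, Z) where
  toFun n := if n < k then g n else 0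
  continuous_toFun := continuous_of_discreteTopology
  zero_at_infty' := by
    rw [cocompact_eq_cofinite, Nat.cofinite_eq_atTop]
    refine tendsto_const_nhds.congr' ?_
    filter_upwards [eventually_ge_atTop k] with n hn
    rw [if_neg (not_lt.2 hn)]

lemma c0Sub_dense (SY : ℕ → NonUnitalStarSubalgebra ℂ Y) (hSY : Monotone SY)
    (hYd : Dense (⋃ k, (SY k : Set Y))) : Dense (⋃ k, (c0Sub (SY k) k : Set C₀(ℕ, Y))) := by
  intro f
  rw [Metric.mem_closure_iff]
  intro ε hε
  have hz : Tendsto f atTop (𝓝 0) := by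
    have := f.zero_at_infty'
    rwa [cocompact_eq_cofinite, Nat.cofinite_eq_atTop] at this
  obtain ⟨N, hN⟩ := Filter.eventually_atTop.1 (Metric.tendsto_nhds.1 hz (ε / 2) (half_pos hε))
  have : ∀ n, ∃ k, ∃ y ∈ SY k, dist (f n) y < ε / 2 := by
    intro n
    obtain ⟨y, hy, hd⟩ := Metric.mem_closure_iff.1 (hYd (f n)) _ (half_pos hε)
    obtain ⟨k, hk⟩ := Set.mem_iUnion.1 hy
    exact ⟨k, y, hk, hd⟩
  choose k y hy hd using this
  let K := max N ((Finset.range N).sup k)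
  refine ⟨finSeq y N, Set.mem_iUnion.2 ⟨K, mem_c0Sub.2 ⟨fun n => ?_, fun n hn => ?_⟩⟩, ?_⟩
  · change (if n < N then y n else 0) ∈ SY K
    split_ifs with h
    · exact hSY ((Finset.le_sup (Finset.mem_range.2 h)).trans (le_max_right _ _)) (hy n)
    · exact zero_mem _
  · change (if n < N then y n else 0) = 0
    rw [if_neg (not_lt.2 ((le_max_left _ _).trans hn))]
  · refine lt_of_le_of_lt ?_ (half_lt_self hε)
    rw [← ZeroAtInftyContinuousMap.dist_toBCF_eq_dist, BoundedContinuousFunction.dist_le (half_pos hε).le]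
    intro n
    change dist (f n) (if n < N then y n else 0) ≤ _
    split_ifs with h
    · exact (hd n).le
    · exact (hN n (not_lt.1 h)).le

theorem compl_c0 (SY : ℕ → NonUnitalStarSubalgebra ℂ Y) (hSY : Monotone SY)
    (hf : ∀ k, FiniteDimensional ℂ (SY k))
    (hYd : Dense (⋃ k, (SY k : Set Y))) (hH : PropH SY) {m0 : ℕ} {Q0 : Y}
    (hQ0 : IsMinProj (SY m0) Q0) : Compl C₀(ℕ, Y) Y := by
  refine compl_nonunital (fun k => c0Sub (SY k) k) ?_ (fun k => c0Sub_fd _ _)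
    (c0Sub_dense SY hSY hYd) SY hSY hYd hH hQ0
  intro a b hab f hf
  have := mem_c0Sub.1 hf
  exact mem_c0Sub.2 ⟨fun n => hSY hab (this.1 n), fun n hn => this.2 n (hab.trans hn)⟩

end C0

section Fermion
variable {F : Type*} [CStarAlgebra F] {S : ℕ → StarSubalgebra ℂ F}

/-- The linear equivalence underlying a star algebra isomorphism. -/
def linEq {k : ℕ} (e : (S k) ≃⋆ₐ[ℂ] Matrix (Fin (2 ^ k)) (Fin (2 ^ k)) ℂ) :
    (S k) ≃ₗ[ℂ] Matrix (Fin (2 ^ k)) (Fin (2 ^ k)) ℂ where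
  toFun := e
  invFun := e.symm
  left_inv := e.symm_apply_apply
  right_inv := e.apply_symm_apply
  map_add' := map_add e
  map_smul' := map_smul e

lemma fermion_fd (hiso : ∀ k, Nonempty ((S k) ≃⋆ₐ[ℂ] Matrix (Fin (2 ^ k)) (Fin (2 ^ k)) ℂ)) (k : ℕ) :
    FiniteDimensional ℂ (S k) := by
  obtain ⟨e⟩ := hiso k
  exact Module.Finite.equiv (linEq e).symm

lemma fermion_finrank (hiso : ∀ k, Nonempty ((S k) ≃⋆ₐ[ℂ] Matrix (Fin (2 ^ k)) (Fin (2 ^ k)) ℂ)) (k : ℕ) :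
    Module.finrank ℂ (S k) = 2 ^ k * 2 ^ k := by
  obtain ⟨e⟩ := hiso k
  rw [LinearEquiv.finrank_eq (linEq e), Module.finrank_matrix]
  simp

lemma fermion_prime (hiso : ∀ k, Nonempty ((S k) ≃⋆ₐ[ℂ] Matrix (Fin (2 ^ k)) (Fin (2 ^ k)) ℂ)) (k : ℕ)
    {a b : F} (ha : a ∈ S k) (hb : b ∈ S k) (ha0 : a ≠ 0) (hb0 : b ≠ 0) :
    ∃ x ∈ S k, a * x * b ≠ 0 := by
  obtain ⟨e⟩ := hiso k
  have ha1 : e ⟨a, ha⟩ ≠ 0 := by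
    intro h
    exact ha0 (congrArg Subtype.val ((map_eq_zero_iff e e.injective).1 h))
  have hb1 : e ⟨b, hb⟩ ≠ 0 := by
    intro h
    exact hb0 (congrArg Subtype.val ((map_eq_zero_iff e e.injective).1 h))
  obtain ⟨i, j, hij⟩ : ∃ i j, e ⟨a, ha⟩ i j ≠ 0 := by
    by_contra! h
    exact ha1 (Matrix.ext h)
  obtain ⟨i', j', hij'⟩ : ∃ i j, e ⟨b, hb⟩ i j ≠ 0 := by
    by_contra! h
    exact hb1 (Matrix.ext h)
  refine ⟨e.symm (Matrix.single j i' 1), (e.symm (Matrix.single j i' 1)).2, fun h => ?_⟩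
  have h2 : (⟨a, ha⟩ * e.symm (Matrix.single j i' 1) * ⟨b, hb⟩ : S k) = 0 := Subtype.ext h
  have h3 := congrFun (congrFun (congrArg e h2) i) j'
  rw [map_mul, map_mul, e.apply_symm_apply, map_zero] at h3
  simp [Matrix.mul_apply, Matrix.single_apply, Finset.sum_ite_eq, ite_and] at h3
  tauto

/-- The non-unital version of the presentation. -/
def SF (S : ℕ → StarSubalgebra ℂ F) (k : ℕ) : NonUnitalStarSubalgebra ℂ F :=
  (S k).toNonUnitalStarSubalgebra

lemma mem_SF {k : ℕ} {x : F} : x ∈ SF S k ↔ x ∈ S k := Iff.rfl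

lemma SF_fd (hiso : ∀ k, Nonempty ((S k) ≃⋆ₐ[ℂ] Matrix (Fin (2 ^ k)) (Fin (2 ^ k)) ℂ)) (k : ℕ) :
    FiniteDimensional ℂ (SF S k) := fermion_fd hiso k

lemma fermion_one_ne (hiso : ∀ k, Nonempty ((S k) ≃⋆ₐ[ℂ] Matrix (Fin (2 ^ k)) (Fin (2 ^ k)) ℂ)) :
    (1 : F) ≠ 0 := by
  intro h
  have h1 := fermion_finrank hiso 0
  have : Subsingleton F := subsingleton_of_zero_eq_one h.symm
  have : Module.finrank ℂ (S 0) = 0 := Module.finrank_zero_of_subsingleton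
  simp at *
  lia

lemma fermion_min (hiso : ∀ k, Nonempty ((S k) ≃⋆ₐ[ℂ] Matrix (Fin (2 ^ k)) (Fin (2 ^ k)) ℂ)) :
    ∃ Q, IsMinProj (SF S 0) Q := by
  have := SF_fd hiso
  obtain ⟨s, hs1, -, hs3⟩ := min_decomp (SF S 0) (q := 1) (mem_SF.2 (one_mem _)) (star_one _) (one_mul _)
  have : s.Nonempty := by
    rw [Finset.nonempty_iff_ne_empty]
    rintro rfl
    exact fermion_one_ne hiso (by rw [← hs3, Finset.sum_empty])
  obtain ⟨p, hp⟩ := this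
  exact ⟨p, hs1 p hp⟩

theorem fermion_propH (hmono : Monotone S)
    (hiso : ∀ k, Nonempty ((S k) ≃⋆ₐ[ℂ] Matrix (Fin (2 ^ k)) (Fin (2 ^ k)) ℂ))
    (hdense : Dense (⋃ k, (S k : Set F))) : PropH (SF S) := by
  have hfd := SF_fd hiso
  have hm : Monotone (SF S) := fun a b h x hx => hmono h hx
  refine propH_of hm hfd hdense ?_ ?_
  · intro m r1 r2 h1 h2 _ _ h3 _ _ h4
    obtain ⟨x, -, hx⟩ := fermion_prime hiso m h1 h2 h3 h4
    exact ⟨x, hx⟩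
  · intro m Q hQ
    by_contra! hcon
    obtain ⟨s, hs1, -, hs3⟩ := min_decomp (SF S m) (q := 1) (mem_SF.2 (one_mem _)) (star_one _) (one_mul _)
    have hw : ∀ p ∈ s, ∃ w ∈ SF S m, star w * w = Q ∧ w * star w = p := by
      intro p hp
      obtain ⟨x, hx, hx0⟩ := fermion_prime hiso m (hs1 p hp).mem hQ.mem (hs1 p hp).ne hQ.ne
      exact min_equiv (hs1 p hp) hQ hx hx0
    choose! w hwm hw1 hw2 using hw
    have hall : ∀ x, x ∈ S m := by
      intro x
      have hx : x = ∑ p ∈ s, ∑ p' ∈ s, p * x * p' := by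
        calc x = (∑ p ∈ s, p) * x * ∑ p ∈ s, p := by rw [hs3, one_mul, mul_one]
          _ = _ := by
            rw [Finset.sum_mul, Finset.sum_mul]
            exact Finset.sum_congr rfl fun p hp => Finset.mul_sum _ _ _
      rw [hx]
      refine sum_mem fun p hp => sum_mem fun p' hp' => ?_
      obtain ⟨c, hc⟩ := hcon (star (w p) * x * w p')
      have e1 : w p * Q = w p := pisom hQ.idem hQ.sa (hw1 p hp)
      have e2 : Q * star (w p') = star (w p') := by
        have := congrArg star (pisom hQ.idem hQ.sa (hw1 p' hp'))
        rwa [star_mul, hQ.sa] at this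
      have : p * x * p' = w p * (c • Q) * star (w p') := by
        rw [← hc]
        calc p * x * p' = w p * star (w p) * x * (w p' * star (w p')) := by
              rw [hw2 p hp, hw2 p' hp']
          _ = (w p * Q) * star (w p) * x * (w p' * (Q * star (w p'))) := by rw [e1, e2]
          _ = _ := by simp only [mul_assoc]
      rw [this]
      exact mul_mem (mul_mem (hwm p hp) (SMulMemClass.smul_mem c hQ.mem)) (star_mem (hwm p' hp'))
    have h1 := fermion_finrank hiso m
    have h2 := fermion_finrank hiso (m + 1)
    have hf1 := fermion_fd hiso m
    let g : S (m + 1) →ₗ[ℂ] S m :=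
      { toFun := fun x => ⟨x.1, hall x.1⟩
        map_add' := fun x y => rfl
        map_smul' := fun c x => rfl }
    have h3 := LinearMap.finrank_le_finrank_of_injective (f := g) (fun x y e =>
      Subtype.ext (congrArg (fun z : S m => (z : F)) e))
    rw [h1, h2] at h3
    have h4 : 0 < 2 ^ m := by positivity
    rw [pow_succ] at h3
    nlinarith
end Fermion
end AFB

namespace AFB
open ZeroAtInfty Filter Topology

section Pel
variable {X Y W : Type*} [NormedAddCommGroup X] [NormedSpace ℂ X] [NormedAddCommGroup Y]
  [NormedSpace ℂ Y] [NormedAddCommGroup W] [NormedSpace ℂ W]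

lemma c0_tendsto (f : C₀(ℕ, X)) : Tendsto f atTop (𝓝 0) := by
  have := f.zero_at_infty'
  rwa [cocompact_eq_cofinite, Nat.cofinite_eq_atTop] at this

/-- A null sequence as an element of `C₀`. -/
def c0mk (g : ℕ → X) (hg : Tendsto g atTop (𝓝 0)) : C₀(ℕ, X) where
  toFun := g
  continuous_toFun := continuous_of_discreteTopology
  zero_at_infty' := by
    rw [cocompact_eq_cofinite, Nat.cofinite_eq_atTop]
    exact hg

@[simp] lemma c0mk_apply (g : ℕ → X) (hg : Tendsto g atTop (𝓝 0)) (n : ℕ) : c0mk g hg n = g n := rfl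

lemma c0_norm_le (f : C₀(ℕ, X)) {C : ℝ} (hC : 0 ≤ C) (h : ∀ n, ‖f n‖ ≤ C) : ‖f‖ ≤ C := by
  rw [← ZeroAtInftyContinuousMap.norm_toBCF_eq_norm]
  exact (BoundedContinuousFunction.norm_le hC).2 h

lemma c0_le_norm (f : C₀(ℕ, X)) (n : ℕ) : ‖f n‖ ≤ ‖f‖ := by
  rw [← ZeroAtInftyContinuousMap.norm_toBCF_eq_norm]
  exact BoundedContinuousFunction.norm_coe_le_norm f.toBCF n

/-- Functoriality of `C₀`. -/
def c0map (T : X →L[ℂ] Y) : C₀(ℕ, X) →L[ℂ] C₀(ℕ, Y) :=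
  LinearMap.mkContinuous
    { toFun := fun f => c0mk (fun n => T (f n)) (by
        have := (T.continuous.tendsto 0).comp (c0_tendsto f)
        rw [map_zero] at this
        exact this)
      map_add' := fun f g => by ext n; simp
      map_smul' := fun c f => by ext n; simp } ‖T‖ (fun f => by
        refine c0_norm_le _ (by positivity) fun n => ?_
        refine (T.le_opNorm _).trans ?_
        gcongr
        exact c0_le_norm f n)

@[simp] lemma c0map_apply (T : X →L[ℂ] Y) (f : C₀(ℕ, X)) (n : ℕ) : c0map T f n = T (f n) := rfl

/-- Evaluation at a point. -/
def c0eval (n : ℕ) : C₀(ℕ, X) →L[ℂ] X :=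
  LinearMap.mkContinuous
    { toFun := fun f => f n
      map_add' := fun f g => rfl
      map_smul' := fun c f => rfl } 1 (fun f => by rw [one_mul]; exact c0_le_norm f n)

/-- The left shift. -/
def c0shift : C₀(ℕ, X) →L[ℂ] C₀(ℕ, X) :=
  LinearMap.mkContinuous
    { toFun := fun f => c0mk (fun n => f (n + 1)) ((tendsto_add_atTop_iff_nat 1).2 (c0_tendsto f))
      map_add' := fun f g => by ext n; simp
      map_smul' := fun c f => by ext n; simp } 1 (fun f => by
        rw [one_mul]
        exact c0_norm_le _ (norm_nonneg f) fun n => c0_le_norm f (n + 1))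

/-- Prepending an entry. -/
def c0cons : X × C₀(ℕ, X) →L[ℂ] C₀(ℕ, X) :=
  LinearMap.mkContinuous
    { toFun := fun p => c0mk (fun n => Nat.casesOn n p.1 (fun k => p.2 k)) (by
        rw [← tendsto_add_atTop_iff_nat 1]
        exact c0_tendsto p.2)
      map_add' := fun f g => by ext n; cases n <;> simp
      map_smul' := fun c f => by ext n; cases n <;> simp } 1 (fun p => by
        rw [one_mul]
        refine c0_norm_le _ (norm_nonneg p) fun n => ?_
        cases n with
        | zero => exact norm_fst_le p
        | succ k => exact (c0_le_norm p.2 k).trans (norm_snd_le p))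

/-- `C₀(ℕ, X) ≅ X × C₀(ℕ, X)`. -/
def c0ShiftEquiv : C₀(ℕ, X) ≃L[ℂ] X × C₀(ℕ, X) :=
  ContinuousLinearEquiv.equivOfInverse ((c0eval 0).prod c0shift) c0cons
    (fun f => by ext n; cases n <;> rfl) (fun p => by
      refine Prod.ext rfl ?_
      ext n; rfl)

/-- `C₀(ℕ, X × W) ≅ C₀(ℕ, X) × C₀(ℕ, W)`. -/
def c0ProdEquiv : C₀(ℕ, X × W) ≃L[ℂ] C₀(ℕ, X) × C₀(ℕ, W) :=
  ContinuousLinearEquiv.equivOfInverse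
    ((c0map (ContinuousLinearMap.fst ℂ X W)).prod (c0map (ContinuousLinearMap.snd ℂ X W)))
    ((c0map (ContinuousLinearMap.inl ℂ X W)).comp (ContinuousLinearMap.fst ℂ _ _) +
      (c0map (ContinuousLinearMap.inr ℂ X W)).comp (ContinuousLinearMap.snd ℂ _ _))
    (fun f => by ext n <;> simp) (fun p => by
      refine Prod.ext ?_ ?_ <;> ext n <;> simp)

/-- Functoriality for equivalences. -/
def c0CongrEquiv (e : X ≃L[ℂ] Y) : C₀(ℕ, X) ≃L[ℂ] C₀(ℕ, Y) :=
  ContinuousLinearEquiv.equivOfInverse (c0map (e : X →L[ℂ] Y)) (c0map (e.symm : Y →L[ℂ] X))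
    (fun f => by ext n; simp) (fun f => by ext n; simp)

lemma absorb (h1 : Compl X Y) (h2 : Compl C₀(ℕ, Y) Y) : Nonempty ((X × Y) ≃L[ℂ] Y) := by
  obtain ⟨i, r, h⟩ := h1
  obtain ⟨i', r', h'⟩ := h2
  have e1 := ContinuousLinearEquiv.equivOfRightInverse r i h
  have e2 := ContinuousLinearEquiv.equivOfRightInverse r' i' h'
  have e3 : C₀(ℕ, Y) ≃L[ℂ] X × C₀(ℕ, Y) :=
    (c0CongrEquiv e1).trans <| c0ProdEquiv.trans <|
      ((c0ShiftEquiv (X := X)).prodCongr (ContinuousLinearEquiv.refl ℂ _)).trans <|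
      (ContinuousLinearEquiv.prodAssoc ℂ _ _ _).trans <|
      (ContinuousLinearEquiv.refl ℂ X).prodCongr (c0ProdEquiv.symm.trans (c0CongrEquiv e1).symm)
  refine ⟨ContinuousLinearEquiv.symm ?_⟩
  exact e2.trans <| (e3.prodCongr (ContinuousLinearEquiv.refl ℂ _)).trans <|
    (ContinuousLinearEquiv.prodAssoc ℂ _ _ _).trans <|
    (ContinuousLinearEquiv.refl ℂ X).prodCongr e2.symm

theorem pelczynski (h1 : Compl X Y) (h2 : Compl Y X) (h3 : Compl C₀(ℕ, Y) Y) :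
    Nonempty (X ≃L[ℂ] Y) := by
  obtain ⟨e1⟩ := absorb h1 h3
  obtain ⟨e2⟩ := absorb (X := Y) ⟨.id ℂ Y, .id ℂ Y, fun _ => rfl⟩ h3
  obtain ⟨i, r, h⟩ := h2
  have e3 := ContinuousLinearEquiv.equivOfRightInverse r i h
  refine ⟨?_⟩
  exact e3.trans <| (e2.symm.prodCongr (ContinuousLinearEquiv.refl ℂ _)).trans <|
    (ContinuousLinearEquiv.prodAssoc ℂ _ _ _).trans <|
    ((ContinuousLinearEquiv.refl ℂ Y).prodCongr e3.symm).trans <|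
    (ContinuousLinearEquiv.prodComm ℂ _ _).trans e1

end Pel
end AFB

namespace AFB
open Filter Topology
open scoped Matrix.Norms.L2Operator

section Sys
variable {X Y : Type*} [NonUnitalCStarAlgebra X] [NonUnitalCStarAlgebra Y]

/-- A sequence of partial isometries with common one-dimensional initial projection. -/
structure SeqSys (p : X) (v : ℕ → X) : Prop where
  pmin : IsMinProj (⊤ : NonUnitalStarSubalgebra ℂ X) p
  on : ∀ i j, star (v i) * v j = if i = j then p else 0

lemma SeqSys.fin {p : X} {v : ℕ → X} (h : SeqSys p v) (n : ℕ) :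
    ONSys (⊤ : NonUnitalStarSubalgebra ℂ X) p (fun i : Fin n => v i) where
  Qmin := h.pmin
  mem _ := NonUnitalStarAlgebra.mem_top
  on s s' := by rw [h.on]; simp [Fin.ext_iff]

/-- The finite sections. -/
def secV (v : ℕ → X) (n : ℕ) : Submodule ℂ X :=
  Submodule.span ℂ (Set.range fun q : Fin n × Fin n => v q.1 * star (v q.2))

/-- The transfer maps. -/
def transf {p : X} {v : ℕ → X} (h : SeqSys p v) (v' : ℕ → Y) (n : ℕ) : X →ₗ[ℂ] Y where
  toFun x := tau (fun i : Fin n => v' i) (sig p (fun i : Fin n => v i) x)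
  map_add' x y := by
    rw [sig_add (h.fin n) NonUnitalStarAlgebra.mem_top NonUnitalStarAlgebra.mem_top, tau_add]
  map_smul' c x := by
    rw [sig_smul (h.fin n) c NonUnitalStarAlgebra.mem_top, tau_smul]; rfl

lemma transf_apply {p : X} {v : ℕ → X} (h : SeqSys p v) (v' : ℕ → Y) (n : ℕ) (x : X) :
    transf h v' n x = tau (fun i : Fin n => v' i) (sig p (fun i : Fin n => v i) x) := rfl

lemma tau_single {n : ℕ} (u : Fin n → X) (i j : Fin n) :
    tau u (Matrix.single i j 1) = u i * star (u j) := by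
  simp only [tau]
  rw [Finset.sum_eq_single i, Finset.sum_eq_single j]
  · simp
  · intro b _ hb; rw [Matrix.single_apply_of_col_ne _ _ hb.symm]; simp
  · simp
  · intro b _ hb
    refine Finset.sum_eq_zero fun c _ => ?_
    rw [Matrix.single_apply_of_row_ne hb.symm]; simp
  · simp

lemma transf_unit {p : X} {v : ℕ → X} (h : SeqSys p v) (v' : ℕ → Y) (n : ℕ) (i j : Fin n) :
    transf h v' n (v i * star (v j)) = v' i * star (v' j) := by
  rw [transf_apply]
  have : sig p (fun i : Fin n => v i) (v i * star (v j)) = Matrix.single i j 1 := by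
    ext a b
    apply sig_unique (h.fin n)
    rw [← tau_single (fun i : Fin n => v i) i j, star_u_tau_u (h.fin n)]
  rw [this, tau_single]

lemma transf_norm {p : X} {v : ℕ → X} (h : SeqSys p v) {p' : Y} {v' : ℕ → Y} (h' : SeqSys p' v')
    (n : ℕ) {x : X} (hx : x ∈ secV v n) : ‖transf h v' n x‖ = ‖x‖ := by
  have e : transf h v n x = x := by
    have : Set.EqOn (transf h v n) (LinearMap.id : X →ₗ[ℂ] X) (secV v n : Set X) := by
      refine LinearMap.eqOn_span ?_
      rintro _ ⟨q, rfl⟩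
      exact transf_unit h v n q.1 q.2
    exact this hx
  conv_rhs => rw [← e]
  rw [transf_apply, transf_apply, tau_norm (h.fin n), tau_norm (h'.fin n)]

lemma secV_mono (v : ℕ → X) : Monotone (secV v) := by
  intro m n hmn
  refine Submodule.span_le.2 ?_
  rintro _ ⟨q, rfl⟩
  exact Submodule.subset_span ⟨(Fin.castLE hmn q.1, Fin.castLE hmn q.2), rfl⟩

theorem sys_isometry {p : X} {v : ℕ → X} (h : SeqSys p v) {p' : Y} {v' : ℕ → Y}
    (h' : SeqSys p' v') (hd : Dense (⋃ n, (secV v n : Set X))) :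
    ∃ Φ : X →ₗᵢ[ℂ] Y, ∀ i j, Φ (v i * star (v j)) = v' i * star (v' j) := by
  obtain ⟨Φ, hΦ⟩ := extend_seq (secV v) (secV_mono v) hd (fun n => transf h v' n) 1
    (fun n x _ y _ => map_add _ x y) (fun n c x _ => map_smul _ c x)
    (fun n x hx => by rw [one_mul]; exact (transf_norm h h' n hx).le)
    (fun n x hx => by
      have : Set.EqOn (transf h v' (n + 1)) (transf h v' n) (secV v n : Set X) := by
        refine LinearMap.eqOn_span ?_
        rintro _ ⟨q, rfl⟩
        refine Eq.trans ?_ (transf_unit h v' n q.1 q.2).symm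
        exact transf_unit h v' (n + 1) q.1.castSucc q.2.castSucc
      exact this hx)
  have hn : (fun x => ‖Φ x‖) = fun x => ‖x‖ := by
    refine Continuous.ext_on hd (by fun_prop) (by fun_prop) ?_
    intro x hx
    obtain ⟨n, hn⟩ := Set.mem_iUnion.1 hx
    change ‖Φ x‖ = ‖x‖
    rw [hΦ n x hn, transf_norm h h' n hn]
  refine ⟨⟨Φ.toLinearMap, fun x => congrFun hn x⟩, fun i j => ?_⟩
  let n := max i j + 1
  have hi : i < n := by lia
  have hj : j < n := by lia
  refine (hΦ n _ (Submodule.subset_span ⟨(⟨i, hi⟩, ⟨j, hj⟩), rfl⟩)).trans ?_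
  exact transf_unit h v' n ⟨i, hi⟩ ⟨j, hj⟩

end Sys
end AFB

namespace AFB
open Filter Topology InnerProductSpace

section Cpt
variable {E : Type*} [NormedAddCommGroup E] [InnerProductSpace ℂ E] [CompleteSpace E]

/-- If a closed submodule contains the images of all basis vectors under a continuous semilinear
map, it contains the whole image. -/
lemma basis_mem {G : Type*} [NormedAddCommGroup G] [NormedSpace ℂ G] {σ : ℂ →+* ℂ} [RingHomIsometric σ]
    {ι : Type*} (b : HilbertBasis ι ℂ E) (M : Submodule ℂ G) (hM : IsClosed (M : Set G))
    (T : E →SL[σ] G) (h : ∀ i, T (b i) ∈ M) (x : E) : T x ∈ M := by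
  have hs := (b.hasSum_repr x).mapL T
  refine hM.mem_of_tendsto hs (Eventually.of_forall fun s => ?_)
  refine sum_mem fun i _ => ?_
  change T _ ∈ M
  rw [map_smulₛₗ]
  exact M.smul_mem _ (h i)

lemma rankOne_mem (b : HilbertBasis ℕ ℂ E) (M : Submodule ℂ (E →L[ℂ] E))
    (hM : IsClosed (M : Set (E →L[ℂ] E))) (h : ∀ i j, rankOne ℂ (b i) (b j) ∈ M) (x y : E) :
    rankOne ℂ x y ∈ M := by
  have h1 : ∀ i, rankOne ℂ (b i) y ∈ M := fun i =>
    basis_mem b M hM (rankOne ℂ (b i)) (fun j => h i j) y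
  let T : E →L[ℂ] (E →L[ℂ] E) := ContinuousLinearMap.flip (rankOne ℂ : E →L[ℂ] E →L⋆[ℂ] E →L[ℂ] E) y
  exact basis_mem b M hM T h1 x

lemma compact_mem (b : HilbertBasis ℕ ℂ E) (M : Submodule ℂ (E →L[ℂ] E))
    (hM : IsClosed (M : Set (E →L[ℂ] E))) (h : ∀ i j, rankOne ℂ (b i) (b j) ∈ M)
    (T : E →L[ℂ] E) (hT : IsCompactOperator T) : T ∈ M := by
  have : T ∈ closure (M : Set (E →L[ℂ] E)) := by
    rw [Metric.mem_closure_iff]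
    intro ε hε
    obtain ⟨K, hK, hKT⟩ := IsCompactOperator.image_closedBall_subset_compact (f := T.toLinearMap) hT 1
    obtain ⟨t, htK, htf, htc⟩ := hK.finite_cover_balls (half_pos hε)
    let U : Submodule ℂ E := Submodule.span ℂ t
    have : FiniteDimensional ℂ U := FiniteDimensional.span_of_finite ℂ htf
    let c := stdOrthonormalBasis ℂ U
    refine ⟨U.starProjection ∘L T, ?_, ?_⟩
    · rw [c.starProjection_eq_sum_rankOne, ContinuousLinearMap.finsetSum_comp]
      refine sum_mem fun i _ => ?_
      rw [rankOne_comp]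
      exact rankOne_mem b M hM h _ _
    · refine lt_of_le_of_lt ?_ (half_lt_self hε)
      rw [dist_eq_norm]
      refine ContinuousLinearMap.opNorm_le_of_unit_norm (half_pos hε).le fun x hx => ?_
      have hx' : T x ∈ K := hKT ⟨x, by simp [hx], rfl⟩
      obtain ⟨y, hy, hd⟩ := Set.mem_iUnion₂.1 (htc hx')
      have hyU : y ∈ U := Submodule.subset_span hy
      have h1 : (T - U.starProjection ∘L T) x = (T x - y) - U.starProjection (T x - y) := by
        rw [map_sub, Submodule.starProjection_eq_self_iff.2 hyU]
        simp
      rw [h1]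
      have h2 : ‖(T x - y) - U.starProjection (T x - y)‖ ≤ ‖T x - y‖ := by
        have := Submodule.starProjection_norm_le Uᗮ
        rw [← Submodule.starProjection_orthogonal_val]
        exact (ContinuousLinearMap.le_of_opNorm_le _ this _).trans (by rw [one_mul])
      refine h2.trans ?_
      rw [← dist_eq_norm]
      exact (Metric.mem_ball.1 hd).le
  rwa [hM.closure_eq] at this

/-- The standard system in `B(E)`. -/
lemma seqSys_std (b : HilbertBasis ℕ ℂ E) :
    SeqSys (X := E →L[ℂ] E) (rankOne ℂ (b 0) (b 0)) (fun i => rankOne ℂ (b i) (b 0)) := by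
  have ho := orthonormal_iff_ite.1 b.orthonormal
  have hs : ∀ x y : E, star (rankOne ℂ x y) = rankOne ℂ y x := fun x y => by
    rw [ContinuousLinearMap.star_eq_adjoint, adjoint_rankOne]
  have hm : ∀ x y z w : E, rankOne ℂ x y * rankOne ℂ z w = (inner ℂ y z : ℂ) • rankOne ℂ x w :=
    fun x y z w => rankOne_comp_rankOne x y z w
  constructor
  · constructor
    · exact NonUnitalStarAlgebra.mem_top
    · exact hs _ _
    · rw [hm, ho]; simp
    · intro h0
      have := b.orthonormal.ne_zero 0
      simp at h0
      exact this h0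
    · intro x _
      refine ⟨inner ℂ (b 0) (x (b 0)), ?_⟩
      rw [mul_assoc]
      have : x * rankOne ℂ (b 0) (b 0) = rankOne ℂ (x (b 0)) (b 0) := comp_rankOne _ _ _
      rw [this, hm]
  · intro i j
    rw [hs, hm, ho]
    split_ifs <;> simp

lemma std_unit (b : HilbertBasis ℕ ℂ E) (i j : ℕ) :
    rankOne ℂ (b i) (b 0) * star (rankOne ℂ (b j) (b 0)) = rankOne ℂ (b i) (b j) := by
  have ho := orthonormal_iff_ite.1 b.orthonormal
  rw [ContinuousLinearMap.star_eq_adjoint, adjoint_rankOne]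
  refine (rankOne_comp_rankOne _ _ _ _).trans ?_
  rw [ho]; simp

lemma rankOne_compact (x y : E) : IsCompactOperator (rankOne ℂ x y) := by
  have h1 : IsCompactOperator (ContinuousLinearMap.toSpanSingleton ℂ x) :=
    isCompactOperator_of_locallyCompactSpace_rng _
  exact h1.comp_clm (innerSL ℂ y)

theorem sys_compact {X : Type*} [NonUnitalCStarAlgebra X] {p : X} {v : ℕ → X} (h : SeqSys p v)
    (hd : Dense (⋃ n, (secV v n : Set X))) : Nonempty (X ≃L[ℂ] ↥CompactOperators) := by
  let b : HilbertBasis ℕ ℂ (lp (fun _ : ℕ => ℂ) 2) := HilbertBasis.ofRepr (LinearIsometryEquiv.refl ℂ _)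
  obtain ⟨Φ, hΦ⟩ := sys_isometry h (seqSys_std b) hd
  have hΦ' : ∀ i j, Φ (v i * star (v j)) = rankOne ℂ (b i) (b j) := fun i j => by
    rw [hΦ, std_unit]
  have hr : LinearMap.range Φ.toLinearMap = CompactOperators := by
    apply le_antisymm
    · have hcl : IsClosed {x : X | IsCompactOperator (Φ x)} :=
        (isClosed_setOfPred_isCompactOperator (σ₁₂ := RingHom.id ℂ)).preimage Φ.continuous
      have hsub : ⋃ n, (secV v n : Set X) ⊆ {x : X | IsCompactOperator (Φ x)} := by
        intro x hx
        obtain ⟨n, hn⟩ := Set.mem_iUnion.1 hx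
        have : secV v n ≤ CompactOperators.comap Φ.toLinearMap := by
          refine Submodule.span_le.2 ?_
          rintro _ ⟨q, rfl⟩
          change IsCompactOperator (Φ (v q.1 * star (v q.2)))
          rw [hΦ']
          exact rankOne_compact _ _
        exact this hn
      have := hcl.closure_subset_iff.2 hsub
      rw [hd.closure_eq] at this
      rintro _ ⟨x, rfl⟩
      exact this (Set.mem_univ x)
    · intro T hT
      refine compact_mem b _ ?_ ?_ T hT
      · exact Φ.isometry.isClosedEmbedding.isClosed_range
      · intro i j
        rw [← hΦ']
        exact ⟨_, rfl⟩
  have e1 : X ≃L[ℂ] LinearMap.range Φ.toLinearMap := Φ.equivRange.toContinuousLinearEquiv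
  exact ⟨e1.trans (ContinuousLinearEquiv.ofEq _ _ hr)⟩

end Cpt
end AFB

namespace AFB
open Filter Topology

section Dich
variable {A : Type*} [NonUnitalCStarAlgebra A]

lemma simple_prime (hs : IsSimpleCStarAlgebra A) {r1 r2 : A} (h1 : r1 * r1 = r1) (h10 : r1 ≠ 0)
    (h20 : r2 ≠ 0) : ∃ x, r1 * x * r2 ≠ 0 := by
  by_contra! hcon
  let C : Set A := {x | ∀ a, r1 * a * x = 0}
  have hC : ∀ x, x ∈ C ↔ ∀ a, r1 * a * x = 0 := fun x => Iff.of_eq (Set.mem_ofPred_eq)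
  let I : TwoSidedIdeal A := TwoSidedIdeal.mk' C ((hC _).2 fun a => mul_zero _)
    (fun {x y} hx hy => (hC _).2 fun a => by rw [mul_add, (hC x).1 hx, (hC y).1 hy, add_zero])
    (fun {x} hx => (hC _).2 fun a => by rw [mul_neg, (hC x).1 hx, neg_zero])
    (fun {x y} hy => (hC _).2 fun a => by
      rw [← mul_assoc, mul_assoc r1]; exact (hC y).1 hy _)
    (fun {x y} hx => (hC _).2 fun a => by rw [← mul_assoc, (hC x).1 hx, zero_mul])
  have hI : ∀ x, x ∈ I ↔ ∀ a, r1 * a * x = 0 := fun x =>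
    (TwoSidedIdeal.mem_mk' _ _ _ _ _ _ _).trans (hC x)
  have hcl : IsClosed (I : Set A) := by
    have : (I : Set A) = ⋂ a, (fun x => r1 * a * x) ⁻¹' {0} := by
      ext x
      simp only [Set.mem_iInter, Set.mem_preimage, Set.mem_singleton_iff]
      exact hI x
    rw [this]
    exact isClosed_iInter fun a => isClosed_singleton.preimage (by fun_prop)
  rcases hs I hcl with h | h
  · have : r2 ∈ I := (hI _).2 hcon
    rw [h] at this
    exact h20 ((TwoSidedIdeal.mem_bot A).1 this)
  · have : r1 ∈ I := by rw [h]; trivial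
    have := (hI _).1 this r1
    rw [h1, h1] at this
    exact h10 this

/-- The left ideal `A p`. -/
def leftId (p : A) : Submodule ℂ A where
  carrier := {a | a * p = a}
  add_mem' := by
    intro a b ha hb
    simp only [Set.mem_ofPred_eq] at *
    rw [add_mul, ha, hb]
  zero_mem' := by
    simp only [Set.mem_ofPred_eq]
    exact zero_mul p
  smul_mem' := by
    intro c a ha
    simp only [Set.mem_ofPred_eq] at *
    rw [smul_mul_assoc, ha]

lemma mem_leftId {p a : A} : a ∈ leftId p ↔ a * p = a := Iff.of_eq (Set.mem_ofPred_eq)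

lemma leftId_inner {p : A} (hp : IsMinProj (⊤ : NonUnitalStarSubalgebra ℂ A) p) (a b : leftId p) :
    star (a : A) * b = coef p (star (a : A) * b) • p := by
  apply coef_spec
  obtain ⟨c, hc⟩ := hp.min (star (a : A) * b) NonUnitalStarAlgebra.mem_top
  refine ⟨c, ?_⟩
  rw [← hc]
  have h1 := mem_leftId.1 b.2
  have h2 := congrArg star (mem_leftId.1 a.2)
  rw [star_mul, hp.sa] at h2
  rw [← mul_assoc, h2, mul_assoc, h1]

lemma proj_norm {p : A} (hp : IsMinProj (⊤ : NonUnitalStarSubalgebra ℂ A) p) : ‖p‖ = 1 := by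
  have h := CStarRing.norm_star_mul_self (x := p)
  rw [hp.sa, hp.idem] at h
  have : ‖p‖ ≠ 0 := norm_ne_zero_iff.2 hp.ne
  field_simp at h
  exact h.symm

/-- The inner product on `A p`. -/
def ipLeft {p : A} (hp : IsMinProj (⊤ : NonUnitalStarSubalgebra ℂ A) p) :
    InnerProductSpace ℂ (leftId p) where
  inner a b := coef p (star (a : A) * b)
  norm_sq_eq_re_inner a := by
    by_cases ha : (a : A) = 0
    · have : a = 0 := Subtype.ext ha
      subst this
      simp [coef_zero]
    obtain ⟨r, hr, he⟩ := coeff_pos hp.sa hp.idem hp.ne ha (leftId_inner hp a a)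
    have h1 : ‖(a : A)‖ * ‖(a : A)‖ = r := by
      rw [← CStarRing.norm_star_mul_self, leftId_inner hp a a, he, norm_smul, proj_norm hp]
      simp [abs_of_pos hr]
    rw [he, sq]
    exact h1
  conj_inner_symm a b := by
    symm
    apply coef_eq hp.ne
    have := congrArg star (leftId_inner hp b a)
    rw [star_mul, star_star, star_smul, hp.sa] at this
    exact this
  add_left a b c := by
    apply coef_eq hp.ne
    rw [add_smul, ← leftId_inner hp, ← leftId_inner hp, ← add_mul, ← star_add]
    rfl
  smul_left a b r := by
    apply coef_eq hp.ne
    rw [mul_smul, ← leftId_inner hp, ← smul_mul_assoc]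
    congr 1
    exact star_smul r (a : A)

lemma leftId_closed (p : A) : IsClosed (leftId p : Set A) := by
  have : (leftId p : Set A) = {a | a * p = a} := rfl
  rw [this]
  exact isClosed_eq (by fun_prop) (by fun_prop)

lemma af_separable (hA : ∃ SA : ℕ → NonUnitalStarSubalgebra ℂ A, IsAFPresentation A SA) :
    TopologicalSpace.SeparableSpace A := by
  obtain ⟨SA, h1, h2, h3⟩ := hA
  rw [← TopologicalSpace.isSeparable_univ_iff, ← h3.closure_eq]
  refine TopologicalSpace.IsSeparable.closure (.iUnion fun k => ?_)
  have := h2 k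
  have : ProperSpace (SA k) := FiniteDimensional.proper ℂ (SA k)
  exact TopologicalSpace.IsSeparable.of_subtype (SA k : Set A)

lemma orthonormal_countable {E : Type*} [NormedAddCommGroup E] [InnerProductSpace ℂ E]
    [TopologicalSpace.SeparableSpace E] {ι : Type*} {b : ι → E} (hb : Orthonormal ℂ b) :
    Countable ι := by
  have hdist : Pairwise fun i j => 1 < dist (b i) (b j) := by
    intro i j hij
    have h := norm_sub_sq (𝕜 := ℂ) (b i) (b j)
    rw [hb.1, hb.1, hb.2 hij] at h
    simp at h
    rw [dist_eq_norm]
    nlinarith [norm_nonneg (b i - b j)]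
  refine Pairwise.countable_of_isOpen_disjoint (s := fun i => Metric.ball (b i) (1 / 2)) ?_
    (fun i => Metric.isOpen_ball) (fun i => ⟨b i, by simp⟩)
  intro i j hij
  exact Metric.ball_disjoint_ball (by linarith [hdist hij])

end Dich
end AFB

namespace AFB
open Filter Topology

section Case1
variable {A : Type*} [NonUnitalCStarAlgebra A]

lemma ideal_top (hs : IsSimpleCStarAlgebra A) {p : A}
    (hp : IsMinProj (⊤ : NonUnitalStarSubalgebra ℂ A) p) :
    (Submodule.span ℂ {x : A | ∃ a ∈ leftId p, ∃ c ∈ leftId p, x = a * star c}).topologicalClosure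
      = ⊤ := by
  set G : Set A := {x : A | ∃ a ∈ leftId p, ∃ c ∈ leftId p, x = a * star c} with hG
  set M := (Submodule.span ℂ G).topologicalClosure with hM
  have hMc : IsClosed (M : Set A) := Submodule.isClosed_topologicalClosure _
  have hGM : ∀ a ∈ leftId p, ∀ c ∈ leftId p, a * star c ∈ M := fun a ha c hc =>
    Submodule.le_topologicalClosure _ (Submodule.subset_span ⟨a, ha, c, hc, rfl⟩)
  have hleft : ∀ y, ∀ x ∈ M, y * x ∈ M := by
    intro y
    have : M ≤ M.comap (ContinuousLinearMap.mul ℂ A y).toLinearMap := by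
      refine Submodule.topologicalClosure_minimal _ ?_ ?_
      · refine Submodule.span_le.2 ?_
        rintro _ ⟨a, ha, c, hc, rfl⟩
        change y * (a * star c) ∈ M
        rw [← mul_assoc]
        exact hGM _ (mem_leftId.2 (by rw [mul_assoc, mem_leftId.1 ha])) c hc
      · exact hMc.preimage (ContinuousLinearMap.mul ℂ A y).continuous
    exact this
  have hright : ∀ y, ∀ x ∈ M, x * y ∈ M := by
    intro y
    have : M ≤ M.comap ((ContinuousLinearMap.mul ℂ A).flip y).toLinearMap := by
      refine Submodule.topologicalClosure_minimal _ ?_ ?_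
      · refine Submodule.span_le.2 ?_
        rintro _ ⟨a, ha, c, hc, rfl⟩
        change a * star c * y ∈ M
        have : a * star c * y = a * star (star y * c) := by rw [star_mul, star_star, mul_assoc]
        rw [this]
        exact hGM _ ha _ (mem_leftId.2 (by rw [mul_assoc, mem_leftId.1 hc]))
      · exact hMc.preimage ((ContinuousLinearMap.mul ℂ A).flip y).continuous
    exact this
  let I : TwoSidedIdeal A := TwoSidedIdeal.mk' (M : Set A) (zero_mem M)
    (fun hx hy => add_mem (S := Submodule ℂ A) hx hy) (fun hx => neg_mem (S := Submodule ℂ A) hx)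
    (fun {x y} hy => hleft x y hy) (fun {x y} hx => hright y x hx)
  have hI : ∀ x, x ∈ I ↔ x ∈ M := fun x => TwoSidedIdeal.mem_mk' _ _ _ _ _ _ _
  have hcl : IsClosed (I : Set A) := by
    have : (I : Set A) = M := Set.ext hI
    rw [this]; exact hMc
  have hpm : p ∈ leftId p := mem_leftId.2 hp.idem
  rcases hs I hcl with h | h
  · exfalso
    have : p ∈ I := (hI _).2 (by
      have := hGM p hpm p hpm
      rwa [hp.sa, hp.idem] at this)
    rw [h] at this
    exact hp.ne ((TwoSidedIdeal.mem_bot A).1 this)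
  · refine eq_top_iff.2 fun x _ => (hI x).1 ?_
    rw [h]; trivial

theorem case1 (hA : ∃ SA : ℕ → NonUnitalStarSubalgebra ℂ A, IsAFPresentation A SA)
    (hs : IsSimpleCStarAlgebra A) (hinf : ¬ FiniteDimensional ℂ A) {p : A}
    (hp : IsMinProj (⊤ : NonUnitalStarSubalgebra ℂ A) p) :
    Nonempty (A ≃L[ℂ] ↥CompactOperators) := by
  let _ : InnerProductSpace ℂ (leftId p) := ipLeft hp
  have hcs : CompleteSpace (leftId p) := (leftId_closed p).completeSpace_coe
  have hsep := af_separable hA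
  have : SecondCountableTopology A := UniformSpace.secondCountable_of_separable A
  classical
  obtain ⟨w, b, hb⟩ := exists_hilbertBasis ℂ (leftId p)
  have hcount : Countable w := orthonormal_countable b.orthonormal
  have hon : ∀ i j : w, star (b i : A) * b j = if i = j then p else 0 := by
    intro i j
    rw [leftId_inner hp]
    have h1 : coef p (star (b i : A) * b j) = if i = j then 1 else 0 :=
      orthonormal_iff_ite.1 b.orthonormal i j
    rw [h1]
    split_ifs <;> simp
  set V : Submodule ℂ A :=
    Submodule.span ℂ (Set.range fun q : w × w => (b q.1 : A) * star (b q.2 : A)) with hV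
  have hVtop : V.topologicalClosure = ⊤ := by
    have hMc : IsClosed (V.topologicalClosure : Set A) := Submodule.isClosed_topologicalClosure _
    rw [eq_top_iff, ← ideal_top hs hp]
    refine Submodule.topologicalClosure_minimal _ (Submodule.span_le.2 ?_) hMc
    rintro _ ⟨a, ha, c, hc, rfl⟩
    have h1 : ∀ i : w, (b i : A) * star c ∈ V.topologicalClosure := by
      intro i
      let T : leftId p →L⋆[ℂ] A :=
        (ContinuousLinearMap.mul ℂ A (b i : A)).comp
          (((starL ℂ : A ≃L⋆[ℂ] A) : A →L⋆[ℂ] A).comp (leftId p).subtypeL)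
      refine basis_mem b V.topologicalClosure hMc T (fun j => ?_) ⟨c, hc⟩
      exact Submodule.le_topologicalClosure _ (Submodule.subset_span ⟨(i, j), rfl⟩)
    let T : leftId p →L[ℂ] A :=
      ((ContinuousLinearMap.mul ℂ A).flip (star c)).comp (leftId p).subtypeL
    exact basis_mem b V.topologicalClosure hMc T h1 ⟨a, ha⟩
  have hwinf : Infinite w := by
    by_contra hfin
    have : Finite w := not_infinite_iff_finite.1 hfin
    apply hinf
    have hVf : FiniteDimensional ℂ V := FiniteDimensional.span_of_finite ℂ (Set.finite_range _)
    have hVc : IsClosed (V : Set A) := Submodule.closed_of_finiteDimensional V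
    rw [hVc.submodule_topologicalClosure_eq] at hVtop
    rw [hVtop] at hVf
    exact Module.Finite.equiv (Submodule.topEquiv : (⊤ : Submodule ℂ A) ≃ₗ[ℂ] A)
  obtain ⟨e⟩ : Nonempty (ℕ ≃ w) := nonempty_equiv_of_countable
  have hsys : SeqSys p (fun n => (b (e n) : A)) := by
    refine ⟨hp, fun i j => ?_⟩
    rw [hon]
    simp
  refine sys_compact hsys ?_
  have hd : Dense (V : Set A) := by
    rw [dense_iff_closure_eq, ← Submodule.topologicalClosure_coe, hVtop]; rfl
  refine hd.mono ?_
  intro x hx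
  have hle : V ≤ ⨆ n, secV (fun n => (b (e n) : A)) n := by
    refine Submodule.span_le.2 ?_
    rintro _ ⟨q, rfl⟩
    have h1 : e.symm q.1 < max (e.symm q.1) (e.symm q.2) + 1 := by lia
    have h2 : e.symm q.2 < max (e.symm q.1) (e.symm q.2) + 1 := by lia
    refine Submodule.mem_iSup_of_mem (max (e.symm q.1) (e.symm q.2) + 1) ?_
    refine Submodule.subset_span ⟨(⟨e.symm q.1, h1⟩, ⟨e.symm q.2, h2⟩), ?_⟩
    simp
  obtain ⟨n, hn⟩ := (Submodule.mem_iSup_of_directed _ (secV_mono _).directed_le).1 (hle hx)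
  exact Set.mem_iUnion.2 ⟨n, hn⟩

end Case1

theorem main_thm (A : Type*) [NonUnitalCStarAlgebra A]
    (hA : ∃ SA : ℕ → NonUnitalStarSubalgebra ℂ A, IsAFPresentation A SA)
    (hAsimple : IsSimpleCStarAlgebra A)
    (hAinf : ¬ FiniteDimensional ℂ A)
    (F : Type*) [CStarAlgebra F]
    (S : ℕ → StarSubalgebra ℂ F)
    (hmono : Monotone S)
    (hiso : ∀ k, Nonempty ((S k) ≃⋆ₐ[ℂ] Matrix (Fin (2 ^ k)) (Fin (2 ^ k)) ℂ))
    (hdense : Dense (⋃ k, (S k : Set F))) :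
    Nonempty (A ≃L[ℂ] ↥CompactOperators) ∨ Nonempty (A ≃L[ℂ] F) := by
  by_cases hc : ∃ p : A, IsMinProj (⊤ : NonUnitalStarSubalgebra ℂ A) p
  · obtain ⟨p, hp⟩ := hc
    exact Or.inl (case1 hA hAsimple hAinf hp)
  · right
    obtain ⟨SA, hSm, hSf, hSd⟩ := hA
    have hHF := fermion_propH hmono hiso hdense
    have hmF : Monotone (SF S) := fun a b h x hx => hmono h hx
    have hfF := SF_fd hiso
    obtain ⟨QF, hQF⟩ := fermion_min hiso
    have hHA : PropH SA := by
      refine propH_of hSm hSf hSd ?_ ?_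
      · intro m r1 r2 _ _ _ h1 h2 _ _ h3
        exact simple_prime hAsimple h1 h2 h3
      · intro m Q hQ
        by_contra! hcon
        exact hc ⟨Q, NonUnitalStarAlgebra.mem_top, hQ.sa, hQ.idem, hQ.ne, fun x _ => hcon x⟩
    obtain ⟨m0, QA, hQA⟩ : ∃ m Q, IsMinProj (SA m) Q := by
      have hx : ∃ m, ∃ x ∈ SA m, x ≠ 0 := by
        by_contra! hcon
        apply hAinf
        have h0 : ∀ x : A, x = 0 := by
          have : (⋃ k, (SA k : Set A)) ⊆ {0} := by
            intro x hx
            obtain ⟨k, hk⟩ := Set.mem_iUnion.1 hx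
            exact hcon k x hk
          have h2 := (isClosed_singleton (x := (0 : A))).closure_subset_iff.2 this
          rw [hSd.closure_eq] at h2
          exact fun x => h2 (Set.mem_univ x)
        have : Subsingleton A := ⟨fun x y => by rw [h0 x, h0 y]⟩
        infer_instance
      obtain ⟨m, x, hx, hx0⟩ := hx
      have := hSf m
      have hxx : star x * x ≠ 0 := fun h => hx0 (CStarRing.star_mul_self_eq_zero_iff x |>.1 h)
      obtain ⟨q, hq, hqs, hqq, hq0, -⟩ := exists_spectral_proj (SA m) (mul_mem (star_mem hx) hx)
        (by rw [star_mul, star_star]) hxx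
      obtain ⟨s, hs1, -, hs3⟩ := min_decomp (SA m) hq hqs hqq
      have : s.Nonempty := by
        rw [Finset.nonempty_iff_ne_empty]
        rintro rfl
        exact hq0 (by rw [← hs3, Finset.sum_empty])
      obtain ⟨r, hr⟩ := this
      exact ⟨m, r, hs1 r hr⟩
    exact pelczynski (compl_nonunital SA hSm hSf hSd (SF S) hmF hdense hHF hQF)
      (compl_nonunital (SF S) hmF hfF hdense SA hSm hSd hHA hQA)
      (compl_c0 (SF S) hmF hfF hdense hHF hQF)

end AFB

theorem simple_af_linearly_homeomorphic_compacts_or_fermion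
    (A : Type*) [NonUnitalCStarAlgebra A]
    (hA : ∃ SA : ℕ → NonUnitalStarSubalgebra ℂ A, IsAFPresentation A SA)
    (hAsimple : IsSimpleCStarAlgebra A)
    (hAinf : ¬ FiniteDimensional ℂ A)
    (F : Type*) [CStarAlgebra F]
    (S : ℕ → StarSubalgebra ℂ F)
    (hmono : Monotone S)
    (hiso : ∀ k, Nonempty ((S k) ≃⋆ₐ[ℂ] Matrix (Fin (2 ^ k)) (Fin (2 ^ k)) ℂ))
    (hdense : Dense (⋃ k, (S k : Set F))) :
    Nonempty (A ≃L[ℂ] ↥CompactOperators) ∨ Nonempty (A ≃L[ℂ] F) := by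
  exact AFB.main_thm A hA hAsimple hAinf F S hmono hiso hdense
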